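/- arXiv:1501.03377 — 3 statements merged into one kernel-verified Lean document; each statement's English description precedes it below -/
import Mathlib

section
/- Let (G,x,y) encode a reflexive regular map that is simple, satisfies 2q² > |G| (density exceeding 1/2), has p = 3, and is not the tetrahedral map tet. Then for all vertices v and w of the map, S_v^T commutes with S_w^T, and S_v^T commutes with S_w^4. -/
namespace RegularMap

variable {G : Type*} [Group G]

/-- The vertex set of the map: left cosets of the cyclic subgroup generated by `y`. -/
abbrev Vertex (y : G) : Type _ := G ⧸ Subgroup.zpowers y

/-- The rotation about the vertex `v = g⟨y⟩`, namely `g * y * g⁻¹`. -/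
def rot (y : G) (v : Vertex y) : G :=
  Quotient.liftOn' v (fun g => g * y * g⁻¹) (by
    intro a b h
    obtain ⟨k, hk⟩ := QuotientGroup.leftRel_apply.mp h
    have hk' : y ^ k = a⁻¹ * b := hk
    have hb : b = a * y ^ k := by rw [hk']; group
    subst hb
    group)

/-- Two vertices are adjacent iff they are distinct and form the endpoint pair of
some edge `g⟨x*y⟩`, whose endpoints are `g⟨y⟩` and `g*x*y⟨y⟩`. -/
def Adj (x y : G) (v w : Vertex y) : Prop :=
  v ≠ w ∧ ∃ g : G,
    ({v, w} : Set (Vertex y)) = {QuotientGroup.mk g, QuotientGroup.mk (g * x * y)}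

/-- The map is simple: no edge has equal endpoints, and distinct edges (left cosets
of `⟨x*y⟩`) have distinct endpoint pairs. -/
def IsSimple (x y : G) : Prop :=
  (∀ g : G, (QuotientGroup.mk g : Vertex y) ≠ QuotientGroup.mk (g * x * y)) ∧
  ∀ g h : G,
    ({QuotientGroup.mk g, QuotientGroup.mk (g * x * y)} : Set (Vertex y)) =
      {QuotientGroup.mk h, QuotientGroup.mk (h * x * y)} →
    (QuotientGroup.mk g : G ⧸ Subgroup.zpowers (x * y)) = QuotientGroup.mk h

/-- The map is reflexive: some group automorphism inverts both `x` and `y`. -/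
def IsReflexive (x y : G) : Prop :=
  ∃ σ : G ≃* G, σ x = x⁻¹ ∧ σ y = y⁻¹

/-- An automorphism of the map (given a reflection σ): either orientation preserving,
`g⟨y⟩ ↦ a*g⟨y⟩`, or orientation reversing, `g⟨y⟩ ↦ a*σ(g)⟨y⟩`. -/
def IsMapAut (y : G) (σ : G ≃* G) (φ : Vertex y → Vertex y) : Prop :=
  (∃ a : G, ∀ g : G, φ (QuotientGroup.mk g) = QuotientGroup.mk (a * g)) ∨
  (∃ a : G, ∀ g : G, φ (QuotientGroup.mk g) = QuotientGroup.mk (a * σ g))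

/-- `v'` is a diagonal neighbour of `v`: `v' = S_w² • v` for some vertex `w` adjacent to `v`. -/
def DiagNeighbor (x y : G) (v v' : Vertex y) : Prop :=
  ∃ w : Vertex y, Adj x y v w ∧ v' = rot y w ^ 2 • v

/-- Diagonal alignment: the reflexive-transitive closure of the diagonal-neighbour relation. -/
def Aligned (x y : G) : Vertex y → Vertex y → Prop :=
  Relation.ReflTransGen (DiagNeighbor x y)

/-- The primitive period `J`: the least `j ≥ 1` such that `S_v^j` fixes every vertex
diagonally aligned with `v` (this is independent of `v`). -/
noncomputable def primPeriod (x y : G) : ℕ :=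
  sInf {j : ℕ | 1 ≤ j ∧ ∀ v v' : Vertex y, Aligned x y v v' → rot y v ^ j • v' = v'}

/-- The even period `T = lcm(J, 2)`. -/
noncomputable def evenPeriod (x y : G) : ℕ := Nat.lcm (primPeriod x y) 2

/-- Relators of the tetrahedral group ⟨X,Y ∣ X³, Y³, (XY)²⟩. -/
def tetRels : Set (FreeGroup (Fin 2)) :=
  {FreeGroup.of 0 ^ 3, FreeGroup.of 1 ^ 3, (FreeGroup.of 0 * FreeGroup.of 1) ^ 2}

/-- Relators of the Fermat group ⟨X,Y ∣ X³, Y^(2n), (XY)², [X,Y]³⟩. -/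
def fermatRels (n : ℕ) : Set (FreeGroup (Fin 2)) :=
  {FreeGroup.of 0 ^ 3, FreeGroup.of 1 ^ (2 * n), (FreeGroup.of 0 * FreeGroup.of 1) ^ 2,
    (FreeGroup.of 0 * FreeGroup.of 1 * (FreeGroup.of 0)⁻¹ * (FreeGroup.of 1)⁻¹) ^ 3}

/-- `(G,x,y)` is the tetrahedral map: the canonical homomorphism from the presented
group ⟨X,Y ∣ X³, Y³, (XY)²⟩ sending X to x and Y to y is an isomorphism. -/
def IsTet (G : Type*) [Group G] (x y : G) : Prop :=
  ∃ e : PresentedGroup tetRels ≃* G,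
    e (PresentedGroup.of 0) = x ∧ e (PresentedGroup.of 1) = y

/-- `(G,x,y)` is the Fermat map `Fer(n)`: the canonical homomorphism from the Fermat
group `G_n` sending X to x and Y to y is an isomorphism. -/
def IsFermat (n : ℕ) (G : Type*) [Group G] (x y : G) : Prop :=
  ∃ e : PresentedGroup (fermatRels n) ≃* G,
    e (PresentedGroup.of 0) = x ∧ e (PresentedGroup.of 1) = y

theorem aux_face {x y : G} (hxy : (x * y) ^ 2 = 1) : y * x = x⁻¹ * y⁻¹ := by
  have h : x * y * (x * y) = 1 := by rw [← pow_two]; exact hxy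
  calc y * x = x⁻¹ * (x * y * (x * y)) * y⁻¹ := by group
    _ = x⁻¹ * y⁻¹ := by rw [h]; group

theorem aux_conj {x y : G} (hxy : (x * y) ^ 2 = 1) :
    x * y * x⁻¹ = y⁻¹ * (x⁻¹ * y * x) * y := by
  have h := aux_face hxy
  have h2 : x * y = y⁻¹ * x⁻¹ := by
    calc x * y = x * (y * x) * x⁻¹ := by group
      _ = y⁻¹ * x⁻¹ := by rw [h]; group
  have h3 : x⁻¹ = y * x * y := by rw [h]; group
  calc x * y * x⁻¹ = (x * y) * x⁻¹ := by group
    _ = (y⁻¹ * x⁻¹) * (y * x * y) := by rw [h2, ← h3]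
    _ = _ := by group

/-- The stabiliser of the diagonal class of the base vertex. -/
def diagSub (x y : G) : Subgroup G := Subgroup.closure {y, x * y ^ 2 * x⁻¹}

theorem y_mem (x y : G) : y ∈ diagSub x y := Subgroup.subset_closure (by simp)
theorem xyx_mem (x y : G) : x * y ^ 2 * x⁻¹ ∈ diagSub x y := Subgroup.subset_closure (by simp)

theorem xyx_mem' {x y : G} (hxy : (x * y) ^ 2 = 1) : x⁻¹ * y ^ 2 * x ∈ diagSub x y := by
  have h := aux_conj hxy
  have : x⁻¹ * y ^ 2 * x = y * (x * y ^ 2 * x⁻¹) * y⁻¹ := by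
    calc x⁻¹ * y ^ 2 * x = y * (y⁻¹ * (x⁻¹ * y * x) * y) * (y⁻¹ * (x⁻¹ * y * x) * y) * y⁻¹ := by
          rw [pow_two]; group
      _ = _ := by rw [← h, pow_two]; group
  rw [this]
  exact mul_mem (mul_mem (y_mem x y) (xyx_mem x y)) (inv_mem (y_mem x y))

theorem cover {x y : G} (hgen : Subgroup.closure {x, y} = ⊤) (hxy : (x * y) ^ 2 = 1)
    (hx : x ^ 3 = 1) (g : G) :
    g ∈ diagSub x y ∨ x⁻¹ * g ∈ diagSub x y ∨ x * g ∈ diagSub x y := by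
  have hg : g ∈ Subgroup.closure {x, y} := by rw [hgen]; trivial
  have hy := y_mem x y
  have h1 := xyx_mem x y
  have h2 := xyx_mem' hxy
  have hf := aux_face hxy
  have hf2 : x * y = y⁻¹ * x⁻¹ := by
    calc x * y = x * (y * x) * x⁻¹ := by group
      _ = y⁻¹ * x⁻¹ := by rw [hf]; group
  have hxx : x * x = x⁻¹ := by
    rw [eq_inv_iff_mul_eq_one, ← hx, pow_succ, pow_two]
  have hxx' : x⁻¹ * x⁻¹ = x := by
    rw [← mul_inv_rev, hxx, inv_inv]
  induction hg using Subgroup.closure_induction_left with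
  | one => left; exact one_mem _
  | mul_left a ha b hb ih =>
    rcases ha with rfl | ha
    · rcases ih with h | h | h
      · right; left; simpa using h
      · right; right
        rw [← mul_assoc, hxx]; exact h
      · left; exact h
    · have ha : a = y := ha
      subst ha
      rcases ih with h | h | h
      · left; exact mul_mem hy h
      · right; right
        rw [← mul_assoc, hf2, mul_assoc]
        exact mul_mem (inv_mem hy) h
      · right; left
        have : x⁻¹ * (a * b) = (x⁻¹ * a ^ 2 * x) * (a * (x * b)) := by
          calc x⁻¹ * (a * b) = (x⁻¹ * a ^ 2 * x) * ((x⁻¹ * a⁻¹) * b) := by group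
            _ = _ := by rw [← hf]; group
        rw [this]
        exact mul_mem h2 (mul_mem hy h)
  | inv_mul_cancel a ha b hb ih =>
    rcases ha with rfl | ha
    · rcases ih with h | h | h
      · right; right; simpa using h
      · left; exact h
      · right; left
        rw [← mul_assoc, hxx']; exact h
    · have ha : a = y := ha
      subst ha
      rcases ih with h | h | h
      · left; exact mul_mem (inv_mem hy) h
      · right; right
        have : x * (a⁻¹ * b) = (x * a ^ 2 * x⁻¹)⁻¹ * (a⁻¹ * (x⁻¹ * b)) := by
          calc x * (a⁻¹ * b) = (x * a ^ 2 * x⁻¹)⁻¹ * ((x * a) * b) := by group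
            _ = _ := by rw [hf2]; group
        rw [this]
        exact mul_mem (inv_mem h1) (mul_mem (inv_mem hy) h)
      · right; left
        rw [← mul_assoc, ← hf, mul_assoc]
        exact mul_mem hy h

theorem mk_mul_y (y g : G) : (QuotientGroup.mk (g * y) : Vertex y) = QuotientGroup.mk g := by
  rw [eq_comm, QuotientGroup.eq]
  simp

theorem mk_mul_y_inv (y g : G) :
    (QuotientGroup.mk (g * y⁻¹) : Vertex y) = QuotientGroup.mk g := by
  rw [eq_comm, QuotientGroup.eq]
  simp

theorem diag_step {x y : G} (hs : IsSimple x y) (g : G) :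
    DiagNeighbor x y (QuotientGroup.mk g) (QuotientGroup.mk (g * (x * y ^ 2 * x⁻¹))) := by
  refine ⟨QuotientGroup.mk (g * x), ⟨?_, g, ?_⟩, ?_⟩
  · have := hs.1 g
    rwa [mk_mul_y] at this
  · rw [mk_mul_y]
  · change _ = (QuotientGroup.mk (((g * x) * y * (g * x)⁻¹) ^ 2 * g) : Vertex y)
    congr 1
    rw [conj_pow]
    group

theorem aligned_of_mem {x y : G} (hs : IsSimple x y) (hxy : (x * y) ^ 2 = 1)
    (hx : x ^ 3 = 1) {h : G} (hh : h ∈ diagSub x y) :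
    Aligned x y (QuotientGroup.mk 1) (QuotientGroup.mk h) := by
  have hf := aux_face hxy
  have hxx : x * x = x⁻¹ := by
    rw [eq_inv_iff_mul_eq_one, ← hx, pow_succ, pow_two]
  have hyi : y⁻¹ = x * y * x := by
    rw [mul_assoc, hf]; group
  have hf2 : x * y = y⁻¹ * x⁻¹ := by rw [hyi]; group
  have key : (x * y ^ 2 * x⁻¹)⁻¹ = y * (x * y ^ 2 * x⁻¹) * y := by
    calc (x * y ^ 2 * x⁻¹)⁻¹ = x * y⁻¹ * (y⁻¹ * x⁻¹) := by group
      _ = x * (x * y * x) * (x * y) := by rw [← hf2, ← hyi]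
      _ = (x * x) * y * (x * x) * y := by group
      _ = x⁻¹ * y * x⁻¹ * y := by rw [hxx]
      _ = y * (y⁻¹ * x⁻¹) * y * x⁻¹ * y := by group
      _ = _ := by rw [← hf2, pow_two]; group
  unfold diagSub at hh
  induction hh using Subgroup.closure_induction_right with
  | one => exact Relation.ReflTransGen.refl
  | mul_right b hb a ha ih =>
    rcases ha with rfl | ha
    · rwa [mk_mul_y]
    · have ha : a = _ := ha
      subst ha
      exact ih.tail (diag_step hs b)
  | mul_inv_cancel b hb a ha ih =>
    rcases ha with rfl | ha
    · rwa [mk_mul_y_inv]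
    · have ha : a = _ := ha
      subst ha
      rw [key, ← mul_assoc, mk_mul_y, ← mul_assoc]
      refine ih.tail ?_
      have := diag_step hs (b * y)
      rwa [mk_mul_y] at this

theorem primPeriod_mem {x y : G} [Finite G] (hs : IsSimple x y) (hxy : (x * y) ^ 2 = 1)
    (hx : x ^ 3 = 1) {h : G} (hh : h ∈ diagSub x y) :
    h⁻¹ * y ^ primPeriod x y * h ∈ Subgroup.zpowers y := by
  have hne : {j : ℕ | 1 ≤ j ∧ ∀ v v' : Vertex y, Aligned x y v v' →
      rot y v ^ j • v' = v'}.Nonempty := by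
    refine ⟨orderOf y, orderOf_pos y, ?_⟩
    intro v v' _
    induction v using QuotientGroup.induction_on with
    | H g =>
      have : rot y (QuotientGroup.mk g : Vertex y) ^ orderOf y = 1 := by
        change (g * y * g⁻¹) ^ orderOf y = 1
        rw [conj_pow, pow_orderOf_eq_one]; group
      rw [this, one_smul]
  have := (Nat.sInf_mem hne).2 _ _ (aligned_of_mem hs hxy hx hh)
  change (QuotientGroup.mk (((1 : G) * y * 1⁻¹) ^ primPeriod x y * h) : Vertex y)
    = QuotientGroup.mk h at this
  rw [eq_comm, QuotientGroup.eq] at this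
  simpa [mul_assoc] using this

theorem zpowers_normal {x y : G} [Finite G] {T : ℕ}
    (hT : ∀ h ∈ diagSub x y, h⁻¹ * y ^ T * h ∈ Subgroup.zpowers y)
    {h : G} (hh : h ∈ diagSub x y) : ∃ k : ℤ, h * y ^ T * h⁻¹ = (y ^ T) ^ k := by
  have h1 := hT _ (inv_mem hh)
  rw [inv_inv] at h1
  obtain ⟨m, hm⟩ := (Submonoid.mem_powers_iff _ _).1 (mem_powers_iff_mem_zpowers.2 h1)
  have ho : orderOf (y ^ m) = orderOf (y ^ T) := by
    rw [hm]
    have := orderOf_injective (MulAut.conj h).toMonoidHom (MulAut.conj h).injective (y ^ T)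
    simpa using this
  have hq := orderOf_pos y
  rw [orderOf_pow, orderOf_pow] at ho
  have hg : (orderOf y).gcd m = (orderOf y).gcd T := by
    have e1 := Nat.div_mul_cancel (Nat.gcd_dvd_left (orderOf y) m)
    have e2 := Nat.div_mul_cancel (Nat.gcd_dvd_left (orderOf y) T)
    rw [ho] at e1
    have hpos : 0 < orderOf y / (orderOf y).gcd T :=
      Nat.div_pos (Nat.gcd_le_left _ hq) (Nat.gcd_pos_of_pos_left _ hq)
    exact Nat.eq_of_mul_eq_mul_left hpos (e1.trans e2.symm)
  obtain ⟨c, hc⟩ := Nat.gcd_dvd_right (orderOf y) m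
  rw [hg] at hc
  have hb := Nat.gcd_eq_gcd_ab (orderOf y) T
  refine ⟨Nat.gcdB (orderOf y) T * c, ?_⟩
  have hz : y ^ ((orderOf y).gcd T) = (y ^ T) ^ (Nat.gcdB (orderOf y) T) := by
    rw [← zpow_natCast, hb, zpow_add, zpow_mul, zpow_natCast, pow_orderOf_eq_one, one_zpow,
      one_mul, zpow_mul, zpow_natCast]
  rw [← hm, hc, pow_mul, hz, zpow_mul, zpow_natCast]

theorem inter_trivial {x y : G} (hs : IsSimple x y) (hxy : (x * y) ^ 2 = 1) {u : G}
    (h1 : u ∈ Subgroup.zpowers y) (h2 : x⁻¹ * u * x ∈ Subgroup.zpowers y) : u = 1 := by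
  have e1 : (QuotientGroup.mk u : Vertex y) = QuotientGroup.mk 1 := by
    rw [eq_comm, QuotientGroup.eq]; simpa using h1
  have e2 : (QuotientGroup.mk (u * x) : Vertex y) = QuotientGroup.mk x := by
    rw [eq_comm, QuotientGroup.eq]; simpa [mul_assoc] using h2
  have h3 := hs.2 u 1 (by rw [mk_mul_y, mk_mul_y, one_mul, e1, e2])
  rw [eq_comm, QuotientGroup.eq] at h3
  obtain ⟨k, hk⟩ := h3
  have hk : (x * y) ^ k = u := by simpa using hk
  rcases Int.even_or_odd' k with ⟨m, rfl | rfl⟩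
  · rw [zpow_mul] at hk
    have : (x * y) ^ (2 : ℤ) = 1 := by exact_mod_cast hxy
    rw [this, one_zpow] at hk
    exact hk.symm
  · rw [zpow_add, zpow_mul] at hk
    have : (x * y) ^ (2 : ℤ) = 1 := by exact_mod_cast hxy
    rw [this, one_zpow, one_mul, zpow_one] at hk
    exfalso
    apply hs.1 1
    rw [one_mul, hk, e1]

theorem commute_conj_iff (a u v : G) : Commute (a * u * a⁻¹) v ↔ Commute u (a⁻¹ * v * a) := by
  constructor
  · intro h
    have := h.map (MulAut.conj a⁻¹).toMonoidHom
    simpa [mul_assoc] using this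
  · intro h
    have := h.map (MulAut.conj a).toMonoidHom
    simpa [mul_assoc] using this

theorem comm_main (x y : G) [Finite G]
    (hgen : Subgroup.closure {x, y} = ⊤) (hxy : (x * y) ^ 2 = 1)
    (hrefl : IsReflexive x y) (hs : IsSimple x y) (hx : x ^ 3 = 1) (c : G) :
    Commute (c * y ^ evenPeriod x y * c⁻¹) (y ^ evenPeriod x y) ∧
      Commute (c * y ^ evenPeriod x y * c⁻¹) (y ^ 4) := by
  set T := evenPeriod x y with hTdef
  obtain ⟨m, hm⟩ : primPeriod x y ∣ T := Nat.dvd_lcm_left _ _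
  obtain ⟨n, hn⟩ : 2 ∣ T := Nat.dvd_lcm_right _ _
  have hT : ∀ h ∈ diagSub x y, h⁻¹ * y ^ T * h ∈ Subgroup.zpowers y := by
    intro h hh
    have h1 := pow_mem (primPeriod_mem hs hxy hx hh) m
    have : (h⁻¹ * y ^ primPeriod x y * h) ^ m = h⁻¹ * y ^ T * h := by
      have := conj_pow (i := m) (a := h⁻¹) (b := y ^ primPeriod x y)
      rw [inv_inv] at this
      rw [this, hm, pow_mul]
    rwa [this] at h1
  have hconj := aux_conj hxy
  -- powers of the basic identity
  have hconjn : ∀ i : ℕ, x * y ^ i * x⁻¹ = y⁻¹ * (x⁻¹ * y ^ i * x) * y := by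
    intro i
    have e1 := conj_pow (i := i) (a := x) (b := y)
    have e2 := conj_pow (i := i) (a := y⁻¹ * x⁻¹) (b := y)
    rw [← e1, hconj]
    have : y⁻¹ * (x⁻¹ * y * x) * y = y⁻¹ * x⁻¹ * y * (y⁻¹ * x⁻¹)⁻¹ := by group
    rw [this, e2]; group
  have hzy : y ^ T ∈ Subgroup.zpowers y := Subgroup.npow_mem_zpowers y T
  have hsH : x * y ^ T * x⁻¹ ∈ diagSub x y := by
    have := pow_mem (xyx_mem x y) n
    rwa [conj_pow, ← pow_mul, ← hn] at this
  have hsH' : x⁻¹ * y ^ T * x ∈ diagSub x y := by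
    have := pow_mem (xyx_mem' hxy) n
    have e := conj_pow (i := n) (a := x⁻¹) (b := y ^ 2)
    rw [inv_inv] at e
    rwa [e, ← pow_mul, ← hn] at this
  -- step 1
  have A1 : Commute (x * y ^ T * x⁻¹) (y ^ T) := by
    have hu : x * y ^ T * x⁻¹ * y ^ T * (x * y ^ T * x⁻¹)⁻¹ * (y ^ T)⁻¹ = 1 := by
      apply inter_trivial hs hxy
      · obtain ⟨k, hk⟩ := zpowers_normal hT hsH
        rw [hk]
        exact mul_mem (zpow_mem hzy k) (inv_mem hzy)
      · obtain ⟨k, hk⟩ := zpowers_normal hT hsH'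
        have : x⁻¹ * (x * y ^ T * x⁻¹ * y ^ T * (x * y ^ T * x⁻¹)⁻¹ * (y ^ T)⁻¹) * x
          = y ^ T * (x⁻¹ * y ^ T * x * y ^ T * (x⁻¹ * y ^ T * x)⁻¹)⁻¹ := by
          generalize y ^ T = z
          group
        rw [this, hk]
        exact mul_mem hzy (inv_mem (zpow_mem hzy k))
    rw [mul_inv_eq_one, mul_inv_eq_iff_eq_mul] at hu
    exact hu
  have A2 : Commute (x⁻¹ * y ^ T * x) (y ^ T) := by
    have := (commute_conj_iff x (y ^ T) (y ^ T)).1 A1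
    exact this.symm
  -- step 2
  have B0 : Commute (y ^ T) (x⁻¹ * y ^ 4 * x) := by
    obtain ⟨σ, hσx, hσy⟩ := hrefl
    obtain ⟨k, hk⟩ := zpowers_normal hT (xyx_mem' hxy)
    set t := x⁻¹ * y ^ 2 * x with ht
    have hσt : y * σ t * y⁻¹ = t⁻¹ := by
      have : y * σ t * y⁻¹ = y * (x * y ^ 2 * x⁻¹)⁻¹ * y⁻¹ := by
        rw [ht]; simp [hσx, hσy, mul_assoc]
      rw [this, hconjn, ht]; group
    have hk2 := congrArg (fun g => y * σ g * y⁻¹) hk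
    have hk3 : t⁻¹ * (y ^ T)⁻¹ * t = (y ^ T) ^ (-k) := by
      have l : y * σ (t * y ^ T * t⁻¹) * y⁻¹ = t⁻¹ * (y ^ T)⁻¹ * t := by
        have e : y * σ (t * y ^ T * t⁻¹) * y⁻¹
          = (y * σ t * y⁻¹) * (y * σ (y ^ T) * y⁻¹) * (y * σ t * y⁻¹)⁻¹ := by
          rw [map_mul, map_mul, map_inv]; group
        have e' : y * σ (y ^ T) * y⁻¹ = (y ^ T)⁻¹ := by
          rw [map_pow, hσy]; group
        rw [e, hσt, e', inv_inv]
      have r : y * σ ((y ^ T) ^ k) * y⁻¹ = (y ^ T) ^ (-k) := by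
        rw [map_zpow, map_pow, hσy, inv_pow, inv_zpow, zpow_neg]
        rw [← zpow_natCast y T, ← zpow_mul]; group
      rw [← l, ← r]; exact hk2
    have hk4 : t⁻¹ * y ^ T * t = (y ^ T) ^ k := by
      have := congrArg (fun g => g⁻¹) hk3
      simpa [mul_assoc] using this
    have hk5 : t * (t * y ^ T * t⁻¹) * t⁻¹ = y ^ T := by
      rw [hk, ← hk4]; group
    have ht2 : x⁻¹ * y ^ 4 * x = t * t := by rw [ht]; group
    rw [ht2]
    change y ^ T * (t * t) = t * t * y ^ T
    calc y ^ T * (t * t) = (t * (t * y ^ T * t⁻¹) * t⁻¹) * (t * t) := by rw [hk5]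
      _ = t * t * y ^ T := by group
  have B1 : Commute (x * y ^ T * x⁻¹) (y ^ 4) := (commute_conj_iff _ _ _).2 B0
  have B2 : Commute (x⁻¹ * y ^ T * x) (y ^ 4) := by
    have := commute_conj_iff x⁻¹ (y ^ T) (y ^ 4)
    rw [inv_inv] at this
    rw [this, hconjn]
    have hc := commute_conj_iff y (y ^ T) (x⁻¹ * y ^ 4 * x)
    rw [← hc]
    have : y * y ^ T * y⁻¹ = y ^ T := by group
    rw [this]; exact B0
  rcases cover hgen hxy hx c with h | h | h
  · obtain ⟨k, hk⟩ := zpowers_normal hT h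
    rw [hk]
    exact ⟨(Commute.refl _).zpow_left k, ((Commute.refl y).pow_pow T 4).zpow_left k⟩
  · obtain ⟨k, hk⟩ := zpowers_normal hT h
    have : c * y ^ T * c⁻¹ = (x * y ^ T * x⁻¹) ^ k := by
      rw [conj_zpow, ← hk]; group
    rw [this]
    exact ⟨A1.zpow_left k, B1.zpow_left k⟩
  · obtain ⟨k, hk⟩ := zpowers_normal hT h
    have : c * y ^ T * c⁻¹ = (x⁻¹ * y ^ T * x) ^ k := by
      have e := conj_zpow (i := k) (a := x⁻¹) (b := y ^ T)
      rw [inv_inv] at e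
      rw [e, ← hk]; group
    rw [this]
    exact ⟨A2.zpow_left k, B2.zpow_left k⟩

/-- For a non-tetrahedral map as above, `S_v^T` commutes with `S_w^T` and with `S_w^4`
for all vertices `v, w`, where `T` is the even period. -/
theorem evenPeriod_rotations_commute
    (G : Type*) [Group G] [Finite G] (x y : G)
    (hgen : Subgroup.closure {x, y} = ⊤) (hxy : (x * y) ^ 2 = 1)
    (hrefl : IsReflexive x y) (hsimple : IsSimple x y)
    (hden : 2 * orderOf y ^ 2 > Nat.card G) (hp : orderOf x = 3)
    (hnt : ¬ IsTet G x y) :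
    ∀ v w : Vertex y,
      Commute (rot y v ^ evenPeriod x y) (rot y w ^ evenPeriod x y) ∧
      Commute (rot y v ^ evenPeriod x y) (rot y w ^ 4) := by
  intro v w
  have hx : x ^ 3 = 1 := by rw [← hp]; exact pow_orderOf_eq_one x
  induction v using QuotientGroup.induction_on with
  | H a =>
  induction w using QuotientGroup.induction_on with
  | H b =>
  have key := comm_main x y hgen hxy hrefl hsimple hx (b⁻¹ * a)
  have ra : rot y (QuotientGroup.mk a : Vertex y) = a * y * a⁻¹ := rfl
  have rb : rot y (QuotientGroup.mk b : Vertex y) = b * y * b⁻¹ := rfl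
  rw [ra, rb, conj_pow, conj_pow, conj_pow]
  have e : ∀ z : G, b⁻¹ * a * z * (b⁻¹ * a)⁻¹ = b⁻¹ * (a * z * a⁻¹) * b := by
    intro z; group
  rw [e] at key
  exact ⟨((commute_conj_iff b _ _).2 key.1.symm).symm,
    ((commute_conj_iff b _ _).2 key.2.symm).symm⟩


end RegularMap
end

section
/- Let (G,x,y) encode a reflexive regular map that is simple, satisfies 2q² > |G| (density exceeding 1/2), has p = 3, and is not the tetrahedral map tet. Then: (i) S_v^T = S_{v'}^T whenever v' is a diagonal neighbour of v; (ii) for every g ∈ G, if v = g⟨y⟩, u = g*x⟨y⟩ and w = g*x²⟨y⟩ are the three vertices of the face g⟨x⟩, then S_v^T · S_u^T · S_w^T = 1 in G. -/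
namespace RegularMap

variable {G : Type*} [Group G]

theorem cyc_mem [Finite G] {g h k : G} (hh : h ∈ Subgroup.zpowers g) (hk : k ∈ Subgroup.zpowers g)
    (ho : orderOf h = orderOf k) : h ∈ Subgroup.zpowers k := by
  obtain ⟨i, rfl⟩ := (mem_powers_iff_mem_zpowers.mpr hh)
  obtain ⟨j, rfl⟩ := (mem_powers_iff_mem_zpowers.mpr hk)
  simp only at ho ⊢
  have hn : 0 < orderOf g := orderOf_pos g
  rw [orderOf_pow, orderOf_pow] at ho
  have hd : (orderOf g).gcd i = (orderOf g).gcd j := by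
    have h1 := Nat.div_mul_cancel (Nat.gcd_dvd_left (orderOf g) i)
    have h2 := Nat.div_mul_cancel (Nat.gcd_dvd_left (orderOf g) j)
    rw [ho] at h1
    have h3 : 0 < orderOf g / (orderOf g).gcd j := by
      rcases Nat.eq_zero_or_pos (orderOf g / (orderOf g).gcd j) with h | h
      · rw [h] at h2; omega
      · exact h
    exact Nat.eq_of_mul_eq_mul_left h3 (h1.trans h2.symm)
  obtain ⟨s, hs⟩ : (orderOf g).gcd j ∣ i := hd ▸ Nat.gcd_dvd_right _ _
  have hb := Nat.gcd_eq_gcd_ab (orderOf g) j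
  refine ⟨(orderOf g).gcdB j * s, ?_⟩
  simp only
  have e : (g ^ i) = (g ^ ((((orderOf g).gcd j : ℕ) : ℤ))) ^ (s : ℤ) := by
    rw [zpow_natCast, zpow_natCast, ← pow_mul, ← hs]
  rw [e, hb, zpow_add, zpow_mul g, zpow_natCast g, pow_orderOf_eq_one, one_zpow, one_mul, zpow_mul,
    zpow_mul, zpow_natCast g]

theorem rot_mk (y g : G) : rot y (QuotientGroup.mk g : Vertex y) = g * y * g⁻¹ := rfl

theorem rot_smul (y g : G) (v : Vertex y) : rot y (g • v) = g * rot y v * g⁻¹ := by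
  induction v using QuotientGroup.induction_on with
  | H h =>
    change rot y (QuotientGroup.mk (g * h) : Vertex y) = _
    rw [rot_mk, rot_mk]; group

theorem fix_iff (y g : G) (v : Vertex y) : g • v = v ↔ g ∈ Subgroup.zpowers (rot y v) := by
  induction v using QuotientGroup.induction_on with
  | H h =>
    rw [rot_mk]
    change (QuotientGroup.mk (g * h) : Vertex y) = QuotientGroup.mk h ↔ _
    rw [eq_comm, QuotientGroup.eq]
    constructor
    · rintro ⟨k, hk⟩
      have hk : y ^ k = h⁻¹ * (g * h) := hk
      refine ⟨k, ?_⟩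
      simp only [conj_zpow, hk]; group
    · rintro ⟨k, hk⟩
      have hk : (h * y * h⁻¹) ^ k = g := hk
      refine ⟨k, ?_⟩
      simp only [← hk, conj_zpow]; group

theorem fix_zpow {y g k : G} {v : Vertex y} (h : g • v = v) (hk : k ∈ Subgroup.zpowers g) :
    k • v = v := by
  rw [fix_iff] at *
  exact (Subgroup.zpowers_le.mpr h) hk

theorem orderOf_conj' (g h : G) : orderOf (g * h * g⁻¹) = orderOf h := by
  have := MulEquiv.orderOf_eq (MulAut.conj g) h
  simpa using this

theorem exists_smul (y : G) (v : Vertex y) : ∃ g : G, v = g • ((1 : G) : Vertex y) := by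
  induction v using QuotientGroup.induction_on with
  | H h => exact ⟨h, by change _ = (QuotientGroup.mk (h * 1) : Vertex y); rw [mul_one]⟩

section basic
variable {x y : G}

theorem yfix : y • ((1 : G) : Vertex y) = ((1 : G) : Vertex y) := by
  rw [fix_iff, rot_mk]; simp

theorem ypfix (k : ℤ) : y ^ k • ((1 : G) : Vertex y) = ((1 : G) : Vertex y) :=
  fix_zpow yfix ⟨k, rfl⟩

theorem smul_one_eq (g : G) : (QuotientGroup.mk g : Vertex y) = g • ((1 : G) : Vertex y) := by
  change _ = (QuotientGroup.mk (g * 1) : Vertex y); rw [mul_one]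

theorem adj_iff (hxy : (x * y) ^ 2 = 1) (hs : IsSimple x y) (v w : Vertex y) :
    Adj x y v w ↔ ∃ g : G, v = g • ((1 : G) : Vertex y) ∧ w = g • x • ((1 : G) : Vertex y) := by
  have e1 : ∀ g : G, (QuotientGroup.mk (g * x * y) : Vertex y) = g • x • ((1 : G) : Vertex y) := by
    intro g
    rw [smul_one_eq, mul_smul, mul_smul, yfix]
  have e2 : (x * y) • x • ((1 : G) : Vertex y) = ((1 : G) : Vertex y) := by
    have : x * y * x = y⁻¹ := by
      rw [eq_inv_iff_mul_eq_one]; rw [← hxy, pow_two]; group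
    rw [← mul_smul, this]
    simpa using ypfix (y := y) (-1)
  constructor
  · rintro ⟨hne, g, hg⟩
    rw [e1, smul_one_eq] at hg
    rw [Set.pair_eq_pair_iff] at hg
    rcases hg with hg | hg
    · exact ⟨g, hg⟩
    · refine ⟨g * (x * y), ?_, ?_⟩
      · rw [hg.1, mul_smul, mul_smul, yfix]
      · rw [mul_smul, e2, hg.2]
  · rintro ⟨g, rfl, rfl⟩
    refine ⟨?_, g, ?_⟩
    · have := hs.1 g
      rw [e1, smul_one_eq] at this
      exact this
    · rw [e1, smul_one_eq g]

theorem swap_vu (hxy : (x * y) ^ 2 = 1) :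
    (x * y) • ((1 : G) : Vertex y) = x • ((1 : G) : Vertex y) ∧
    (x * y) • x • ((1 : G) : Vertex y) = ((1 : G) : Vertex y) := by
  refine ⟨by rw [mul_smul, yfix], ?_⟩
  have : x * y * x = y⁻¹ := by
    rw [eq_inv_iff_mul_eq_one]; rw [← hxy, pow_two]; group
  rw [← mul_smul, this]
  simpa using ypfix (y := y) (-1)

theorem diag_iff (hxy : (x * y) ^ 2 = 1) (hs : IsSimple x y) (v v' : Vertex y) :
    DiagNeighbor x y v v' ↔ ∃ g : G, v = g • x • ((1 : G) : Vertex y) ∧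
      v' = g • y ^ 2 • x • ((1 : G) : Vertex y) := by
  constructor
  · rintro ⟨w, hw, rfl⟩
    obtain ⟨g, rfl, rfl⟩ := (adj_iff hxy hs _ _).mp hw
    obtain ⟨h1, h2⟩ := swap_vu hxy
    refine ⟨g * (x * y), by rw [mul_smul, h2], ?_⟩
    rw [← h1, ← mul_smul g, rot_smul, rot_mk]
    have h3 : (x * y)⁻¹ = x * y := by
      rw [inv_eq_iff_mul_eq_one, ← pow_two, hxy]
    rw [conj_pow, one_mul, inv_one, mul_one, mul_inv_rev g, h3, mul_smul, mul_smul _ (y ^ 2),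
      mul_smul (x * y) g⁻¹, inv_smul_smul]
  · rintro ⟨g, rfl, rfl⟩
    refine ⟨g • ((1 : G) : Vertex y), ?_, ?_⟩
    · rw [adj_iff hxy hs]
      obtain ⟨h1, h2⟩ := swap_vu hxy
      exact ⟨g * (x * y), by rw [mul_smul, h1], by rw [mul_smul, h2]⟩
    · rw [rot_smul, rot_mk]
      simp only [conj_pow, mul_smul]
      simp

theorem al_smul (hxy : (x * y) ^ 2 = 1) (hs : IsSimple x y) (g : G) {v v' : Vertex y}
    (h : Aligned x y v v') : Aligned x y (g • v) (g • v') := by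
  refine Relation.ReflTransGen.lift (p := DiagNeighbor x y) (fun v => g • v) ?_ _ _ h
  intro a b hab
  change DiagNeighbor x y (g • a) (g • b)
  rw [diag_iff hxy hs] at *
  obtain ⟨k, rfl, rfl⟩ := hab
  exact ⟨g * k, by rw [mul_smul], by rw [mul_smul]⟩

theorem al_pow (hxy : (x * y) ^ 2 = 1) (hs : IsSimple x y) (n : ℕ) :
    Aligned x y (x • ((1 : G) : Vertex y)) ((y ^ 2) ^ n • x • ((1 : G) : Vertex y)) := by
  induction n with
  | zero => rw [pow_zero, one_smul]; exact Relation.ReflTransGen.refl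
  | succ n ih =>
    refine ih.tail ?_
    rw [diag_iff hxy hs]
    exact ⟨(y ^ 2) ^ n, rfl, by rw [pow_succ, mul_smul]⟩

theorem al_zpow [Finite G] (hxy : (x * y) ^ 2 = 1) (hs : IsSimple x y) (n : ℤ) :
    Aligned x y (x • ((1 : G) : Vertex y)) ((y ^ 2) ^ n • x • ((1 : G) : Vertex y)) := by
  have : (y ^ 2) ^ n ∈ Submonoid.powers (y ^ 2) := mem_powers_iff_mem_zpowers.mpr ⟨n, rfl⟩
  obtain ⟨k, hk⟩ := this
  simp only at hk
  rw [← hk]; exact al_pow hxy hs k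

theorem al_symm [Finite G] (hxy : (x * y) ^ 2 = 1) (hs : IsSimple x y) {v v' : Vertex y}
    (h : Aligned x y v v') : Aligned x y v' v := by
  induction h with
  | refl => exact Relation.ReflTransGen.refl
  | tail _ h ih =>
    refine Relation.ReflTransGen.trans ?_ ih
    rw [diag_iff hxy hs] at h
    obtain ⟨k, rfl, rfl⟩ := h
    have := al_smul hxy hs (k * y ^ 2) (al_zpow hxy hs (-1))
    simp only [mul_smul, zpow_neg, zpow_one, smul_inv_smul] at this
    exact this

theorem al_trans {v v' v'' : Vertex y}
    (h : Aligned x y v v') (h' : Aligned x y v' v'') : Aligned x y v v'' :=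
  Relation.ReflTransGen.trans h h'

theorem fix_two (hs : IsSimple x y) {h : G} (h1 : h • ((1 : G) : Vertex y) = ((1 : G) : Vertex y))
    (h2 : h • x • ((1 : G) : Vertex y) = x • ((1 : G) : Vertex y)) (hxy : (x * y) ^ 2 = 1) :
    h = 1 := by
  have hy := swap_vu hxy (y := y)
  have := hs.2 h 1 (by
    rw [mul_assoc, smul_one_eq h, smul_one_eq (h * (x * y)), smul_one_eq (1 * x * y), mul_smul h,
      one_mul, hy.1, h1, h2])
  rw [eq_comm, QuotientGroup.eq] at this
  obtain ⟨k, hk⟩ := this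
  simp only [inv_one, one_mul] at hk
  have h0 := hs.1 1
  rw [one_mul, smul_one_eq (x * y)] at h0
  rcases Int.even_or_odd' k with ⟨m, rfl | rfl⟩
  · rw [zpow_mul, show (2 : ℤ) = ((2 : ℕ) : ℤ) from rfl, zpow_natCast, hxy, one_zpow] at hk
    exact hk.symm
  · rw [zpow_add, zpow_mul, show (2 : ℤ) = ((2 : ℕ) : ℤ) from rfl, zpow_natCast, hxy, one_zpow,
      zpow_one, one_mul] at hk
    rw [hk] at h0
    exact absurd h1.symm h0

end basic

theorem smul_mem_zpowers {V : Type*} [MulAction G V] {g k : G} {v : V} (h : g • v = v)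
    (hk : k ∈ Subgroup.zpowers g) : k • v = v := by
  have h1 : g ∈ MulAction.stabilizer G v := h
  exact (Subgroup.zpowers_le.mpr h1) hk

theorem zpowers_conj {g h k : G} (hk : k ∈ Subgroup.zpowers g) :
    h * k * h⁻¹ ∈ Subgroup.zpowers (h * g * h⁻¹) := by
  obtain ⟨n, rfl⟩ := hk
  exact ⟨n, by simp only [conj_zpow]⟩

theorem core [Finite G] {V : Type*} [MulAction G V] [Finite V] (x y : G) (o : V)
    (R : V → V → Prop) (hr : ∀ v, R v v) (hsy : ∀ v v', R v v' → R v' v)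
    (htr : ∀ v v' v'', R v v' → R v' v'' → R v v'')
    (hR : ∀ (g : G) v v', R v v' → R (g • v) (g • v'))
    (hstab : ∀ g : G, g • o = o ↔ g ∈ Subgroup.zpowers y)
    (htrans : ∀ v : V, ∃ g : G, v = g • o)
    (hdiag : ∀ k : ℤ, R (x • o) ((y ^ 2) ^ k • x • o))
    (hfix : ∀ h : G, h • o = o → h • x • o = x • o → h = 1)
    (hcard : Nat.card V < 2 * orderOf y) (hn : ¬ R o (x • o))
    (T : ℕ) (hT2 : 2 ∣ T) (hTf : ∀ v, R o v → y ^ T • v = v)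
    (hTd : ∀ e : ℤ, (∀ v, R o v → y ^ e • v = v) → 2 ∣ e → (T : ℤ) ∣ e)
    (hx3 : x ^ 3 = 1) (hxy : (x * y) ^ 2 = 1)
    (σ : G ≃* G) (hσx : σ x = x⁻¹) (hσy : σ y = y⁻¹) :
    y ^ T * (x * y ^ T * x⁻¹) * ((x * x) * y ^ T * (x * x)⁻¹) = 1 ∧
      y ^ T * (x * y ^ T * x⁻¹) = (x * y ^ T * x⁻¹) * y ^ T := by
  have xx : x⁻¹ = x * x := by
    rw [inv_eq_iff_mul_eq_one, ← hx3, pow_three]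
  have xxx : x * x * x = 1 := by rw [← hx3, pow_three, mul_assoc]
  have xyx : x * y * x = y⁻¹ := by
    rw [eq_inv_iff_mul_eq_one, ← hxy, pow_two]; group
  have yxy : y * x * y = x⁻¹ := by
    rw [eq_inv_iff_mul_eq_one, mul_eq_one_iff_eq_inv, eq_comm, inv_eq_iff_mul_eq_one,
      ← hxy, pow_two]; group
  have yo : y • o = o := (hstab y).mpr (Subgroup.mem_zpowers y)
  have zo : ∀ k : ℤ, y ^ k • o = o := fun k => (hstab _).mpr ⟨k, rfl⟩
  have yu : y • x • o = x • x • o := by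
    have : (y * x * y) • o = (x * x) • o := by rw [yxy, xx]
    simpa only [mul_smul, yo] using this
  have xw : x • x • x • o = o := by rw [← mul_smul, ← mul_smul, xxx, one_smul]
  have hnuw : ¬ R (x • o) (x • x • o) := by
    intro h
    apply hn
    have := hR x⁻¹ _ _ h
    simpa only [inv_smul_smul] using this
  obtain ⟨S, hS⟩ : ∃ S, S = y ^ 2 := ⟨_, rfl⟩
  have hSk : ∀ k : ℤ, S ^ k = y ^ (2 * k) := by
    intro k; rw [hS, zpow_mul]; norm_cast
  rw [← hS] at hdiag
  obtain ⟨a, ha⟩ : ∃ a, a = y ^ T := ⟨_, rfl⟩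
  obtain ⟨b, hb⟩ : ∃ b, b = x * a * x⁻¹ := ⟨_, rfl⟩
  obtain ⟨c, hc⟩ : ∃ c, c = (x * x) * a * (x * x)⁻¹ := ⟨_, rfl⟩
  rw [← ha, ← hb, ← hc]
  have hcb : c = x * b * x⁻¹ := by rw [hc, hb]; group
  have hac : a = x * c * x⁻¹ := by
    have : x * c * x⁻¹ = (x * x * x) * a * (x * x * x)⁻¹ := by rw [hc]; group
    rw [this, xxx]; group
  have hyS : ∀ k : ℤ, y * S ^ k = S ^ k * y := by
    intro k; rw [hSk]; group
  have hya : y * a = a * y := by rw [ha]; group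
  have hybc : y * b * y⁻¹ = c := by
    have h1 : y * x = x⁻¹ * y⁻¹ := by rw [← yxy]; group
    have h2 : y * b * y⁻¹ = (y * x) * a * (y * x)⁻¹ := by rw [hb]; group
    have h3 : (x⁻¹ * y⁻¹) * a * (x⁻¹ * y⁻¹)⁻¹ = x⁻¹ * (y⁻¹ * (a * y)) * x := by group
    rw [h2, h1, h3, ← hya, hc, ← xx]; group
  have aS : a = S ^ ((T / 2 : ℕ) : ℤ) := by
    rw [hSk, ha, ← zpow_natCast]; congr 1; omega
  -- fixing
  have F : ∀ h v, R (h • o) v → (h * a * h⁻¹) • v = v := by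
    intro h v hv
    have h1 := hR h⁻¹ _ _ hv
    rw [inv_smul_smul] at h1
    have h2 := hTf _ h1
    rw [mul_smul, mul_smul, ha, h2, smul_inv_smul]
  have F2 : ∀ k h : G, h • k • o = k • o → h • k • x • o = k • x • o → h = 1 := by
    intro k h h1 h2
    have h3 := hfix (k⁻¹ * h * k) (by rw [mul_smul, mul_smul, h1, inv_smul_smul])
      (by rw [mul_smul, mul_smul, h2, inv_smul_smul])
    have h4 : h = k * (k⁻¹ * h * k) * k⁻¹ := by group
    rw [h4, h3]; group
  have N : ∀ h g : G, R (h • o) (g • h • o) → g * (h * a * h⁻¹) * g⁻¹ ∈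
      Subgroup.zpowers (h * a * h⁻¹) := by
    intro h g hg
    have h1 : a • (h⁻¹ * g * h)⁻¹ • o = (h⁻¹ * g * h)⁻¹ • o := by
      rw [ha]; apply hTf
      have := hR (h⁻¹ * g * h)⁻¹ _ _ (hsy _ _ (hR h⁻¹ _ _ hg))
      have e : (h⁻¹ * g * h)⁻¹ • h⁻¹ • g • h • o = o := by
        simp only [← mul_smul]
        convert one_smul G o using 2
        group
      rw [e, inv_smul_smul] at this
      exact this
    have h2 : (h⁻¹ * g * h) * a * (h⁻¹ * g * h)⁻¹ ∈ Subgroup.zpowers y := by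
      rw [← hstab, mul_smul, mul_smul, h1, smul_inv_smul]
    have h3 := cyc_mem h2 (k := a) ⟨(T : ℤ), by rw [ha]; simp⟩ (orderOf_conj' _ _)
    have h4 := zpowers_conj (h := h) h3
    rwa [show h * ((h⁻¹ * g * h) * a * (h⁻¹ * g * h)⁻¹) * h⁻¹ = g * (h * a * h⁻¹) * g⁻¹ by group]
      at h4
  -- classes
  have QS : ∀ k : ℤ, R o (S ^ k • o) ∧ R (x • o) (S ^ k • x • o) ∧
      R (x • x • o) (S ^ k • x • x • o) := by
    intro k
    refine ⟨?_, hdiag k, ?_⟩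
    · rw [hSk, zo]; exact hr _
    · have := hR y _ _ (hdiag k)
      rw [← mul_smul y (S ^ k), hyS, mul_smul, yu] at this
      exact this
  have Qx : ∀ g : G, (R o (g • o) ∧ R (x • o) (g • x • o) ∧ R (x • x • o) (g • x • x • o)) →
      (R o ((x * g * x⁻¹) • o) ∧ R (x • o) ((x * g * x⁻¹) • x • o) ∧
        R (x • x • o) ((x * g * x⁻¹) • x • x • o)) := by
    rintro g ⟨h1, h2, h3⟩
    refine ⟨?_, ?_, ?_⟩
    · have := hR x _ _ h3
      rw [xw] at this
      rw [mul_smul, mul_smul]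
      nth_rw 2 [← xw]
      rw [inv_smul_smul]; exact this
    · have := hR x _ _ h1
      rw [mul_smul, mul_smul, inv_smul_smul]; exact this
    · have := hR x _ _ h2
      rw [mul_smul, mul_smul, inv_smul_smul]; exact this
  have Qm : ∀ g h : G, (R o (g • o) ∧ R (x • o) (g • x • o) ∧ R (x • x • o) (g • x • x • o)) →
      (R o (h • o) ∧ R (x • o) (h • x • o) ∧ R (x • x • o) (h • x • x • o)) →
      (R o ((g * h) • o) ∧ R (x • o) ((g * h) • x • o) ∧ R (x • x • o) ((g * h) • x • x • o)) := by
    rintro g h ⟨h1, h2, h3⟩ ⟨k1, k2, k3⟩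
    simp only [mul_smul]
    exact ⟨htr _ _ _ h1 (hR g _ _ k1), htr _ _ _ h2 (hR g _ _ k2), htr _ _ _ h3 (hR g _ _ k3)⟩
  have Qa := QS ((T / 2 : ℕ) : ℤ)
  rw [← aS] at Qa
  have Qb := Qx _ Qa
  rw [← hb] at Qb
  have Qc := Qx _ Qb
  rw [← hcb] at Qc
  have ao : ∀ k ∈ Subgroup.zpowers a, k • o = o := fun k hk =>
    smul_mem_zpowers (by rw [ha]; exact hTf _ (hr _)) hk
  have bu : ∀ k ∈ Subgroup.zpowers b, k • x • o = x • o := fun k hk =>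
    smul_mem_zpowers (by rw [hb]; exact F x _ (hr _)) hk
  have cw : ∀ k ∈ Subgroup.zpowers c, k • x • x • o = x • x • o := fun k hk =>
    smul_mem_zpowers (by rw [hc]; exact F (x * x) _ (by rw [mul_smul]; exact hr _)) hk
  have Na : ∀ g : G, R o (g • o) → g * a * g⁻¹ ∈ Subgroup.zpowers a := by
    intro g hg
    have := N 1 g (by simpa using hg)
    simpa using this
  have Nb : ∀ g : G, R (x • o) (g • x • o) → g * b * g⁻¹ ∈ Subgroup.zpowers b := by
    intro g hg
    rw [hb]; exact N x g hg
  have Nc : ∀ g : G, R (x • x • o) (g • x • x • o) → g * c * g⁻¹ ∈ Subgroup.zpowers c := by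
    intro g hg
    rw [hc]; exact N (x * x) g (by rw [mul_smul]; exact hg)
  have ab : a * b = b * a := by
    have h1 : a * b * a⁻¹ * b⁻¹ ∈ Subgroup.zpowers b :=
      mul_mem (Nb a Qa.2.1) (inv_mem (Subgroup.mem_zpowers b))
    have h2 : a * b * a⁻¹ * b⁻¹ ∈ Subgroup.zpowers a := by
      rw [show a * b * a⁻¹ * b⁻¹ = a * (b * a * b⁻¹)⁻¹ by group]
      exact mul_mem (Subgroup.mem_zpowers a) (inv_mem (Na b Qb.1))
    have h3 := hfix _ (ao _ h2) (bu _ h1)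
    rw [mul_inv_eq_one, mul_inv_eq_iff_eq_mul] at h3
    exact h3
  have bc : b * c = c * b := by
    have h1 : b * c = x * (a * b) * x⁻¹ := by rw [hcb, hb]; group
    have h2 : c * b = x * (b * a) * x⁻¹ := by rw [hcb, hb]; group
    rw [h1, h2, ab]
  -- Step 1
  have hSc : S⁻¹ * c * S ∈ Subgroup.zpowers c := by
    have := Nc (S ^ (-1 : ℤ)) (QS (-1)).2.2
    simpa using this
  have hf : (x * y) * c * (x * y)⁻¹ = S⁻¹ * c * S := by
    have h1 : S⁻¹ * (x * x) = (x * y) * (x * x) * y := by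
      rw [← xx, show (x * y) * x⁻¹ * y = (x * y * x) * x⁻¹ * x⁻¹ * y by group, xyx, hS]
      rw [show y⁻¹ * x⁻¹ * x⁻¹ * y = y⁻¹ * (x⁻¹ * x⁻¹) * y by group]
      have h2 : x⁻¹ * x⁻¹ = x := by
        rw [← mul_inv_rev, ← xx, inv_inv]
      rw [h2, ← yxy]; group
    have h2 : S⁻¹ * c * S = (S⁻¹ * (x * x)) * a * (S⁻¹ * (x * x))⁻¹ := by rw [hc]; group
    have h3 : (x * y) * (x * x) * y * a * ((x * y) * (x * x) * y)⁻¹ =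
      (x * y) * (x * x) * (y * a) * y⁻¹ * ((x * y) * (x * x))⁻¹ := by group
    rw [h2, h1, h3, hya, hc]; group
  have hS2c : Commute (S ^ 2) c := by
    obtain ⟨m, hm⟩ := hSc
    simp only at hm
    have h1 : c = (c ^ m) ^ m := by
      have e1 : (x * y) * ((x * y) * c * (x * y)⁻¹) * (x * y)⁻¹ = c := by
        have : (x * y) * ((x * y) * c * (x * y)⁻¹) * (x * y)⁻¹ =
          (x * y) ^ 2 * c * ((x * y) ^ 2)⁻¹ := by rw [pow_two]; group
        rw [this, hxy]; group
      rw [hf, ← hm, ← conj_zpow, hf, ← hm] at e1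
      exact e1.symm
    have h2 : S⁻¹ * (S⁻¹ * c * S) * S = c := by
      have e := conj_zpow (i := m) (a := S⁻¹) (b := c)
      rw [inv_inv] at e
      rw [← hm, ← e, ← hm, ← h1]
    have h3 : S ^ 2 * (S⁻¹ * (S⁻¹ * c * S) * S) = c * S ^ 2 := by rw [pow_two]; group
    rw [h2] at h3
    exact h3
  -- Step 2
  obtain ⟨r, hq⟩ : ∃ r, orderOf y = 2 * r := by
    rcases Nat.even_or_odd' (orderOf y) with ⟨s, hs | hs⟩
    · exact ⟨s, hs⟩
    · exfalso
      have h1 := (QS ((s : ℤ) + 1)).2.1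
      have h2 : S ^ ((s : ℤ) + 1) = y := by
        rw [hSk, show 2 * ((s : ℤ) + 1) = ((2 * s + 1 : ℕ) : ℤ) + 1 by push_cast; ring, ← hs,
          zpow_add, zpow_natCast, pow_orderOf_eq_one, one_mul, zpow_one]
      rw [h2, yu] at h1
      exact hnuw h1
  have hq0 : 0 < orderOf y := orderOf_pos y
  have inj : ∀ i j : ℕ, i < r → j < r → S ^ i • x • o = S ^ j • x • o → i = j := by
    intro i j hi hj h
    have h1 := hfix ((S ^ j)⁻¹ * S ^ i) (by
      have := zo (2 * (-j + i))
      rw [← hSk, zpow_add, zpow_neg, zpow_natCast, zpow_natCast] at this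
      exact this) (by rw [mul_smul, h, inv_smul_smul])
    rw [inv_mul_eq_one, hS, ← pow_mul, ← pow_mul] at h1
    have := pow_injOn_Iio_orderOf (x := y) (show 2 * j ∈ Set.Iio (orderOf y) by
      rw [Set.mem_Iio]; omega) (show 2 * i ∈ Set.Iio (orderOf y) by rw [Set.mem_Iio]; omega) h1
    omega
  obtain ⟨B, hB⟩ : ∃ B : Set V, B = {v | R (x • o) v} := ⟨_, rfl⟩
  have memB : ∀ v, v ∈ B ↔ R (x • o) v := by intro v; rw [hB]; rfl
  have cardB : 3 * B.ncard < 4 * r := by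
    have ix : Function.Injective (fun v : V => x • v) := MulAction.injective x
    have d1 : Disjoint B ((fun v : V => x • v) '' B) := by
      rw [Set.disjoint_left]
      rintro _ h ⟨v, hv, rfl⟩
      rw [memB] at h hv
      exact hnuw (htr _ _ _ h (hsy _ _ (hR x _ _ hv)))
    have d2 : Disjoint (B ∪ ((fun v : V => x • v) '' B))
        ((fun v : V => x • v) '' ((fun v : V => x • v) '' B)) := by
      rw [Set.disjoint_union_left]
      constructor
      · rw [Set.disjoint_left]
        rintro _ h ⟨_, ⟨v, hv, rfl⟩, rfl⟩
        rw [memB] at h hv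
        have := htr _ _ _ h (hsy _ _ (hR x _ _ (hR x _ _ hv)))
        rw [xw] at this
        exact hn (hsy _ _ this)
      · exact (Set.disjoint_image_iff ix).mpr d1
    have h1 := Set.ncard_le_card (B ∪ ((fun v : V => x • v) '' B) ∪
        ((fun v : V => x • v) '' ((fun v : V => x • v) '' B)))
    rw [Set.ncard_union_eq d2 (Set.toFinite _) (Set.toFinite _),
      Set.ncard_union_eq d1 (Set.toFinite _) (Set.toFinite _),
      Set.ncard_image_of_injective _ ix, Set.ncard_image_of_injective _ ix,
      Set.ncard_image_of_injective _ ix] at h1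
    omega
  obtain ⟨N1, hN1⟩ : ∃ N1 : Set V, N1 = (fun i : ℕ => S ^ i • x • o) '' (Finset.range r : Set ℕ) :=
    ⟨_, rfl⟩
  have cN1 : N1.ncard = r := by
    rw [hN1, Set.ncard_image_of_injOn, Set.ncard_coe_finset, Finset.card_range]
    intro i hi j hj h
    simp only [Finset.coe_range, Set.mem_Iio] at hi hj
    exact inj i j hi hj h
  have N1B : N1 ⊆ B := by
    rw [hN1]
    rintro _ ⟨i, -, rfl⟩
    rw [memB]
    have := hdiag i
    rwa [zpow_natCast] at this
  obtain ⟨k, hk⟩ : ∃ k : ℤ, c • x • o = S ^ k • x • o := by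
    by_contra hcon
    push Not at hcon
    have cN2 : ((fun i : ℕ => c • S ^ (2 * i) • x • o) ''
        (Finset.range ((r + 1) / 2) : Set ℕ)).ncard = (r + 1) / 2 := by
      rw [Set.ncard_image_of_injOn, Set.ncard_coe_finset, Finset.card_range]
      intro i hi j hj h
      simp only [Finset.coe_range, Set.mem_Iio] at hi hj
      have := inj (2 * i) (2 * j) (by omega) (by omega) (MulAction.injective c h)
      omega
    have N2B : ((fun i : ℕ => c • S ^ (2 * i) • x • o) ''
        (Finset.range ((r + 1) / 2) : Set ℕ)) ⊆ B := by
      rintro _ ⟨i, -, rfl⟩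
      rw [memB]
      have := hdiag ((2 * i : ℕ) : ℤ)
      rw [zpow_natCast] at this
      exact htr _ _ _ Qc.2.1 (hR c _ _ this)
    have d : Disjoint N1 ((fun i : ℕ => c • S ^ (2 * i) • x • o) ''
        (Finset.range ((r + 1) / 2) : Set ℕ)) := by
      rw [Set.disjoint_left, hN1]
      rintro _ ⟨j, -, rfl⟩ ⟨i, -, h⟩
      simp only at h
      apply hcon (-((2 * i : ℕ) : ℤ) + j)
      rw [zpow_add, zpow_neg, zpow_natCast, zpow_natCast, mul_smul, ← h,
        ← mul_smul c (S ^ (2 * i)), pow_mul, ← (hS2c.pow_left i).eq, mul_smul, inv_smul_smul]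
    have h1 := Set.ncard_le_ncard (Set.union_subset N1B N2B) (Set.toFinite _)
    rw [Set.ncard_union_eq d (Set.toFinite _) (Set.toFinite _), cN1, cN2] at h1
    omega
  -- Step 3
  have hσo : ∀ h h' : G, h • o = h' • o → σ h • o = σ h' • o := by
    intro h h' e
    have h1 : (h'⁻¹ * h) • o = o := by rw [mul_smul, e, inv_smul_smul]
    obtain ⟨k, hk⟩ := (hstab _).mp h1
    simp only at hk
    have h2 : h = h' * y ^ k := by rw [hk]; group
    rw [h2, map_mul, map_zpow, hσy, inv_zpow', mul_smul, zo]
  have σa : σ a = a⁻¹ := by rw [ha, map_pow, hσy, inv_pow]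
  have σb : σ b = c⁻¹ := by
    rw [hb, map_mul, map_mul, map_inv, hσx, σa, hc, ← xx]; group
  have σc : σ c = b⁻¹ := by
    have h2 : σ (x * x) = x := by rw [← xx, map_inv, hσx, inv_inv]
    rw [hc, map_mul, map_mul, map_inv, h2, σa, hb]; group
  have σS : ∀ k : ℤ, σ (S ^ k) = S ^ (-k) := by
    intro k
    rw [hSk, hSk, map_zpow, hσy, inv_zpow', mul_neg]
  have Skb : S ^ k * b * (S ^ k)⁻¹ = b := by
    have h1 : ((S ^ k * x)⁻¹ * (c * x)) • o = o := by
      rw [mul_smul, mul_smul c, hk, ← mul_smul (S ^ k), inv_smul_smul]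
    obtain ⟨l, hl⟩ := (hstab _).mp h1
    simp only at hl
    have h2 : c * x = S ^ k * x * y ^ l := by rw [hl]; group
    have h3 : y ^ l * a = a * y ^ l := by rw [ha]; group
    have h4 : c * b * c⁻¹ = (c * x) * a * (c * x)⁻¹ := by rw [hb]; group
    rw [← bc, h2, show S ^ k * x * y ^ l * a * (S ^ k * x * y ^ l)⁻¹ =
      S ^ k * x * (y ^ l * a) * (y ^ l)⁻¹ * (S ^ k * x)⁻¹ by group, h3] at h4
    rw [show b * c * c⁻¹ = b by group] at h4
    rw [hb] at h4 ⊢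
    refine Eq.trans ?_ h4.symm
    group
  have Skc : Commute (S ^ k) c := by
    have := congrArg σ Skb
    rw [map_mul, map_mul, map_inv, σS, σb] at this
    have h2 : S ^ k * (S ^ (-k) * c⁻¹ * (S ^ (-k))⁻¹)⁻¹ = c * S ^ k := by group
    rw [this, inv_inv] at h2
    exact h2
  have hk1 : c • S • x • o = S ^ k • S • x • o := by
    have h1 := hσo (c * x) (S ^ k * x) (by rw [mul_smul, mul_smul, hk])
    rw [map_mul, map_mul, σc, σS, hσx] at h1
    have h2 : x⁻¹ • o = y • x • o := by rw [yu, xx, mul_smul]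
    rw [mul_smul, mul_smul, h2] at h1
    have h3 := congrArg (fun v => y • v) h1
    have h4 : y • y • x • o = S • x • o := by rw [hS, pow_two, mul_smul]
    have h5 : y * b⁻¹ = c⁻¹ * y := by rw [← hybc]; group
    rw [← mul_smul y b⁻¹, h5, mul_smul, ← mul_smul y (S ^ (-k)), hyS, mul_smul, h4] at h3
    rw [inv_smul_eq_iff, zpow_neg] at h3
    rw [← mul_smul c, ← Skc.inv_left.eq, mul_smul, eq_inv_smul_iff] at h3
    exact h3.symm
  have Scomm : Commute S c := by
    have h1 : (S⁻¹ * c * S * c⁻¹) ∈ Subgroup.zpowers c :=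
      mul_mem hSc (inv_mem (Subgroup.mem_zpowers c))
    have h1' := cw _ h1
    have h2 : (c⁻¹ * (S⁻¹ * c * S)) ∈ Subgroup.zpowers c :=
      mul_mem (inv_mem (Subgroup.mem_zpowers c)) hSc
    have h3 := F2 x (c⁻¹ * (S⁻¹ * c * S)) (by
      rw [mul_smul, mul_smul, mul_smul, hk1, ← mul_smul S⁻¹,
        ← mul_smul (S⁻¹ * S ^ k), show S⁻¹ * S ^ k * S = S ^ k by group, ← hk, inv_smul_smul])
      (cw _ h2)
    rw [inv_mul_eq_one] at h3
    have h4 : S * (S⁻¹ * c * S) = c * S := by group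
    rw [← h3] at h4
    exact h4
  -- Step 4
  obtain ⟨g, hg⟩ : ∃ g, g = (S ^ k)⁻¹ * c := ⟨_, rfl⟩
  have gN : ∀ v ∈ N1, g • v = v := by
    rw [hN1]
    rintro _ ⟨i, -, rfl⟩
    have h1 : g * S ^ i = S ^ i * g := by
      rw [hg, mul_assoc, ← (Scomm.pow_left i).eq]; group
    change g • S ^ i • x • o = S ^ i • x • o
    rw [← mul_smul, h1, mul_smul, hg, mul_smul, hk, inv_smul_smul]
  have stabv : ∀ z h : G, h • z • o = z • o → h ∈ Subgroup.zpowers (z * y * z⁻¹) := by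
    intro z h e
    have h1 : (z⁻¹ * h * z) • o = o := by rw [mul_smul, mul_smul, e, inv_smul_smul]
    have := zpowers_conj (h := z) ((hstab _).mp h1)
    rwa [show z * (z⁻¹ * h * z) * z⁻¹ = h by group] at this
  have gB : ∀ v, R (x • o) v → g • v = v := by
    intro v hv
    obtain ⟨z0, rfl⟩ := htrans v
    obtain ⟨z, hz⟩ : ∃ z, z = z0 * x⁻¹ := ⟨_, rfl⟩
    have hz0 : z0 • o = z • x • o := by rw [hz, mul_smul, inv_smul_smul]
    rw [hz0] at hv ⊢
    obtain ⟨v1, h1, h2⟩ : ∃ v1 ∈ N1, z • v1 ∈ N1 := by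
      by_contra hcon
      push Not at hcon
      have d : Disjoint N1 ((fun v : V => z • v) '' N1) := by
        rw [Set.disjoint_left]
        rintro _ h ⟨v, hv, rfl⟩
        exact hcon v hv h
      have sB : ((fun v : V => z • v) '' N1) ⊆ B := by
        rintro _ ⟨v, hv', rfl⟩
        have := N1B hv'
        rw [memB] at this ⊢
        exact htr _ _ _ hv (hR z _ _ this)
      have h1 := Set.ncard_le_ncard (Set.union_subset N1B sB) (Set.toFinite _)
      rw [Set.ncard_union_eq d (Set.toFinite _) (Set.toFinite _),
        Set.ncard_image_of_injective _ (MulAction.injective z), cN1] at h1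
      omega
    obtain ⟨z1, hz1⟩ := htrans (z • v1)
    have f1 : g • z1 • o = z1 • o := by rw [← hz1]; exact gN _ h2
    have f2 : (z * g * z⁻¹) • z1 • o = z1 • o := by
      rw [← hz1, mul_smul, mul_smul, inv_smul_smul, gN _ h1]
    have h3 := cyc_mem (stabv _ _ f1) (stabv _ _ f2) (orderOf_conj' _ _).symm
    refine smul_mem_zpowers ?_ h3
    rw [mul_smul, mul_smul, inv_smul_smul, gN]
    rw [hN1]
    refine ⟨0, ?_, by simp⟩
    simp only [Finset.coe_range, Set.mem_Iio]; omega
  obtain ⟨i, hi⟩ : ∃ i : ℤ, g = b ^ i := by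
    have h1 := stabv _ _ (gB _ (hr _))
    obtain ⟨e, he⟩ := h1
    simp only at he
    rw [conj_zpow] at he
    have he' : y ^ e = x⁻¹ * g * x := by rw [← he]; group
    have h2 : ∀ v, R o v → y ^ e • v = v := by
      intro v hv
      rw [he', mul_smul, mul_smul, gB _ (hR x _ _ hv), inv_smul_smul]
    have Qg := Qm _ _ (QS (-k)) Qc
    rw [zpow_neg, ← hg] at Qg
    have h3 : (2 : ℤ) ∣ e := by
      rcases Int.even_or_odd' e with ⟨s, hs | hs⟩
      · exact ⟨s, hs⟩
      · exfalso
        have h4 := hR x⁻¹ _ _ Qg.2.2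
        rw [inv_smul_smul, ← mul_smul g, ← mul_smul x⁻¹,
          show x⁻¹ * (g * x) = x⁻¹ * g * x by group, ← he', hs, zpow_add, zpow_one, ← hSk,
          mul_smul, yu] at h4
        exact hnuw (htr _ _ _ h4 (hsy _ _ (QS s).2.2))
    obtain ⟨i, rfl⟩ := hTd e h2 h3
    refine ⟨i, ?_⟩
    rw [← he, hb, conj_zpow, ha, zpow_mul, zpow_natCast]
  have hc1 : c = S ^ k * b ^ i := by rw [← hi, hg]; group
  -- Step 5
  have hc2 : c = a ^ i * (x * S ^ k * x⁻¹) := by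
    have h1 := congrArg σ hc1
    rw [map_mul, map_zpow σ b i, σc, σb, σS] at h1
    have h2 : c = x * (b⁻¹)⁻¹ * x⁻¹ := by rw [inv_inv, hcb]
    rw [h1] at h2
    rw [h2, hac, conj_zpow]; group
  have hSa : S ^ k = a ^ i := by
    have e : (a ^ i)⁻¹ * S ^ k = x * S ^ k * x⁻¹ * (b ^ i)⁻¹ := by
      rw [inv_mul_eq_iff_eq_mul, ← mul_assoc, eq_mul_inv_iff_mul_eq, ← hc1, hc2]
    have h1 := hfix ((a ^ i)⁻¹ * S ^ k) (by
      rw [mul_smul, hSk, zo]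
      exact ao _ (inv_mem ⟨i, rfl⟩)) (by
      rw [e, mul_smul, bu _ (inv_mem ⟨i, rfl⟩), mul_smul, mul_smul, inv_smul_smul, hSk, zo])
    rw [inv_mul_eq_one] at h1
    exact h1.symm
  rw [hSa] at hc1
  have hAB : Commute a b := ab
  have ha1 : a = b ^ i * c ^ i := by
    have h1 : x * c * x⁻¹ = (x * a * x⁻¹) ^ i * (x * b * x⁻¹) ^ i := by
      rw [conj_zpow, conj_zpow]; nth_rw 1 [hc1]; group
    rw [← hac, ← hb, ← hcb] at h1
    exact h1
  have h6 : a ^ (1 - i * i) = b ^ (i + i * i) := by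
    rw [hc1, (hAB.zpow_zpow i i).mul_zpow, ← zpow_mul, ← zpow_mul] at ha1
    have e := (hAB.zpow_zpow (i * i) i).eq
    rw [← mul_assoc, ← e, mul_assoc, ← zpow_add] at ha1
    rw [sub_eq_neg_add, zpow_add, zpow_one, zpow_neg, inv_mul_eq_iff_eq_mul]
    exact ha1
  have h7 : a ^ (1 - i * i) = 1 := by
    apply hfix
    · exact ao _ ⟨_, rfl⟩
    · rw [h6]; exact bu _ ⟨_, rfl⟩
  have h8 : b ^ (1 - i * i) = 1 := by rw [hb, conj_zpow, h7]; group
  have h9 : b ^ (1 + i) = 1 := by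
    rw [show 1 + i = (1 - i * i) + (i + i * i) by ring, zpow_add, h8, ← h6, h7, one_mul]
  have h10 : a ^ (1 + i) = 1 := by
    rw [hb, conj_zpow, mul_inv_eq_one] at h9
    simpa using h9
  refine ⟨?_, ab⟩
  rw [hc1]
  have e1 := (hAB.zpow_left i).eq
  rw [show a * b * (a ^ i * b ^ i) = a * (b * a ^ i) * b ^ i by group, ← e1,
    show a * (a ^ i * b) * b ^ i = a ^ (1 + i) * b ^ (1 + i) by group, h9, h10, one_mul]

theorem face_base [Finite G] (x y : G) (hxy : (x * y) ^ 2 = 1)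
    (hrefl : IsReflexive x y) (hs : IsSimple x y)
    (hden : 2 * orderOf y ^ 2 > Nat.card G) (hp : orderOf x = 3) :
    y ^ evenPeriod x y * (x * y ^ evenPeriod x y * x⁻¹) *
      ((x * x) * y ^ evenPeriod x y * (x * x)⁻¹) = 1 ∧
      y ^ evenPeriod x y * (x * y ^ evenPeriod x y * x⁻¹) =
        (x * y ^ evenPeriod x y * x⁻¹) * y ^ evenPeriod x y := by
  have hJ : primPeriod x y ∈ {j : ℕ | 1 ≤ j ∧ ∀ v v' : Vertex y, Aligned x y v v' →
      rot y v ^ j • v' = v'} := by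
    apply Nat.sInf_mem
    refine ⟨orderOf y, orderOf_pos y, ?_⟩
    intro v v' _
    obtain ⟨g, rfl⟩ := exists_smul y v
    rw [rot_smul, rot_mk, conj_pow]
    simp [pow_orderOf_eq_one]
  obtain ⟨hJ1, hJf⟩ := hJ
  have hJ0 : ∀ v : Vertex y, Aligned x y ((1 : G) : Vertex y) v → y ^ primPeriod x y • v = v := by
    intro v hv
    have := hJf _ _ hv
    rw [rot_mk] at this
    simpa using this
  have hT0 : ∀ v : Vertex y, Aligned x y ((1 : G) : Vertex y) v → y ^ evenPeriod x y • v = v := by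
    intro v hv
    obtain ⟨s, hs⟩ := Nat.dvd_lcm_left (primPeriod x y) 2
    rw [evenPeriod, hs, pow_mul]
    exact smul_mem_zpowers (hJ0 v hv) ⟨s, by simp⟩
  by_cases hA : Aligned x y ((1 : G) : Vertex y) (x • ((1 : G) : Vertex y))
  · have h1 : y ^ evenPeriod x y = 1 := by
      refine fix_two hs ?_ (hT0 _ hA) hxy
      have := ypfix (y := y) (evenPeriod x y)
      rwa [zpow_natCast] at this
    rw [h1]; constructor <;> group
  · obtain ⟨σ, hσx, hσy⟩ := hrefl
    refine core x y ((1 : G) : Vertex y) (Aligned x y) (fun v => Relation.ReflTransGen.refl)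
      (fun v v' h => al_symm hxy hs h) (fun v v' v'' h h' => al_trans h h')
      (fun g v v' h => al_smul hxy hs g h) ?_ (exists_smul y) (al_zpow hxy hs)
      (fun h h1 h2 => fix_two hs h1 h2 hxy) ?_ hA (evenPeriod x y) (Nat.dvd_lcm_right _ _) hT0 ?_
      (by rw [← hp]; exact pow_orderOf_eq_one x) hxy σ hσx hσy
    · intro g
      rw [fix_iff, rot_mk]; simp
    · have h1 := Subgroup.card_eq_card_quotient_mul_card_subgroup (Subgroup.zpowers y)
      rw [Nat.card_zpowers] at h1
      rw [h1, pow_two, ← mul_assoc] at hden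
      exact Nat.lt_of_mul_lt_mul_right hden
    · intro e he h2
      rw [Int.natCast_dvd]
      refine Nat.lcm_dvd ?_ (by omega)
      rw [← Int.natCast_dvd]
      obtain ⟨n, hn⟩ := Int.eq_ofNat_of_zero_le
        (Int.emod_nonneg e (b := (primPeriod x y : ℤ)) (by omega))
      have hlt := Int.emod_lt_of_pos e (b := (primPeriod x y : ℤ)) (by omega)
      rw [Int.dvd_iff_emod_eq_zero, hn]
      by_contra hne
      have hlt' : n < primPeriod x y := by omega
      apply Nat.notMem_of_lt_sInf hlt'
      refine ⟨by omega, ?_⟩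
      intro v v' hv
      obtain ⟨g, rfl⟩ := exists_smul y v
      have h3 := al_smul hxy hs g⁻¹ hv
      rw [inv_smul_smul] at h3
      have h4 : y ^ n • g⁻¹ • v' = g⁻¹ • v' := by
        have e1 : y ^ n = y ^ e * ((y ^ primPeriod x y) ^ (e / (primPeriod x y : ℤ)))⁻¹ := by
          rw [← zpow_natCast y n, ← hn, Int.emod_def, zpow_sub, zpow_mul, zpow_natCast]
        rw [e1, mul_smul, smul_mem_zpowers (hJ0 _ h3) (inv_mem ⟨_, rfl⟩), he _ h3]
      rw [rot_smul, rot_mk, conj_pow]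
      simp only [one_mul, inv_one, mul_one]
      rw [mul_smul, mul_smul, h4, smul_inv_smul]

/-- For a non-tetrahedral map as above: `S_v^T = S_{v'}^T` for diagonal neighbours,
and `S_v^T · S_u^T · S_w^T = 1` for the three vertices of any face. -/
theorem evenPeriod_face_relation
    (G : Type*) [Group G] [Finite G] (x y : G)
    (hgen : Subgroup.closure {x, y} = ⊤) (hxy : (x * y) ^ 2 = 1)
    (hrefl : IsReflexive x y) (hsimple : IsSimple x y)
    (hden : 2 * orderOf y ^ 2 > Nat.card G) (hp : orderOf x = 3)
    (hnt : ¬ IsTet G x y) :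
    (∀ v v' : Vertex y, DiagNeighbor x y v v' →
      rot y v ^ evenPeriod x y = rot y v' ^ evenPeriod x y) ∧
    ∀ g : G,
      rot y (QuotientGroup.mk g : Vertex y) ^ evenPeriod x y *
        rot y (QuotientGroup.mk (g * x) : Vertex y) ^ evenPeriod x y *
        rot y (QuotientGroup.mk (g * x ^ 2) : Vertex y) ^ evenPeriod x y = 1 := by
  obtain ⟨key, hab⟩ := face_base x y hxy hrefl hsimple hden hp
  have ga : ∀ g : G, rot y (QuotientGroup.mk g : Vertex y) ^ evenPeriod x y =
      g * y ^ evenPeriod x y * g⁻¹ := by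
    intro g; rw [rot_mk, conj_pow]
  constructor
  · intro v v' h
    obtain ⟨g, rfl, rfl⟩ := (diag_iff hxy hsimple _ _).mp h
    simp only [rot_smul, conj_pow, ga]
    obtain ⟨a, ha⟩ : ∃ a, a = y ^ evenPeriod x y := ⟨_, rfl⟩
    have hya : y * a * y⁻¹ = a := by rw [ha]; group
    have xx : x⁻¹ = x * x := by
      rw [inv_eq_iff_mul_eq_one, ← pow_three, ← hp, pow_orderOf_eq_one]
    have yxy : y * x * y = x⁻¹ := by
      rw [eq_inv_iff_mul_eq_one, mul_eq_one_iff_eq_inv, eq_comm, inv_eq_iff_mul_eq_one,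
        ← hxy, pow_two]; group
    rw [← ha] at key hab ⊢
    obtain ⟨b, hb⟩ : ∃ b, b = x * a * x⁻¹ := ⟨_, rfl⟩
    obtain ⟨c, hc⟩ : ∃ c, c = (x * x) * a * (x * x)⁻¹ := ⟨_, rfl⟩
    rw [← hb, ← hc] at key
    rw [← hb] at hab
    have hybc : y * b * y⁻¹ = c := by
      have h1 : y * x = x⁻¹ * y⁻¹ := by rw [← yxy]; group
      have h2 : y * b * y⁻¹ = (y * x) * a * (y * x)⁻¹ := by rw [hb]; group
      have h3 : (x⁻¹ * y⁻¹) * (y * a * y⁻¹) * (x⁻¹ * y⁻¹)⁻¹ = x⁻¹ * a * x := by group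
      rw [hya] at h3
      rw [h2, h1, h3, hc, ← xx]; group
    have hycb : y * c * y⁻¹ = b := by
      have h1 : (y * a * y⁻¹) * (y * b * y⁻¹) * (y * c * y⁻¹) = y * (a * b * c) * y⁻¹ := by group
      rw [key, hya, hybc] at h1
      have hc' : c = (a * b)⁻¹ := by
        rw [eq_comm, inv_eq_iff_mul_eq_one]; exact key
      have h3 : y * c * y⁻¹ = (a * c)⁻¹ * (a * c * (y * c * y⁻¹)) := by group
      rw [h3, h1, hc', hab]; group
    have h1 : y ^ 2 * b * (y ^ 2)⁻¹ = b := by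
      have : y ^ 2 * b * (y ^ 2)⁻¹ = y * (y * b * y⁻¹) * y⁻¹ := by rw [pow_two]; group
      rw [this, hybc, hycb]
    have e1 : g * (x * (1 * a * 1⁻¹) * x⁻¹) * g⁻¹ = g * b * g⁻¹ := by rw [hb]; group
    have e2 : g * (y ^ 2 * (x * (1 * a * 1⁻¹) * x⁻¹) * (y ^ 2)⁻¹) * g⁻¹ =
      g * (y ^ 2 * b * (y ^ 2)⁻¹) * g⁻¹ := by rw [hb]; group
    rw [e1, e2, h1]
  · intro g
    rw [ga, ga, ga]
    have : g * y ^ evenPeriod x y * g⁻¹ * (g * x * y ^ evenPeriod x y * (g * x)⁻¹) *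
      (g * x ^ 2 * y ^ evenPeriod x y * (g * x ^ 2)⁻¹) = g * (y ^ evenPeriod x y *
      (x * y ^ evenPeriod x y * x⁻¹) * ((x * x) * y ^ evenPeriod x y * (x * x)⁻¹)) * g⁻¹ := by
      rw [pow_two]; group
    rw [this, key]; group

end RegularMap
end

section
/- Let (G,x,y) encode a reflexive regular map that is simple, is not the tetrahedral map tet, and satisfies 2q² > |G| and 3q² ≤ 2|G| (i.e. 1/2 < den ≤ 2/3). Then 3q² = 2|G|, i.e. the density equals 2/3. -/
namespace RegularMap

variable {G : Type*} [Group G]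

section core
variable {G : Type*} [Group G]

def DD (e y : G) (d : ℤ) : Prop := ∃ a b : ℤ, e * y ^ d * e = y ^ a * e * y ^ b

theorem core_uniq {e y : G} (he : e * e = 1)
    (hI : ∀ i j : ℤ, e * y ^ i * e = y ^ j → y ^ i = 1)
    {a b c d : ℤ} (h : y ^ a * e * y ^ b = y ^ c * e * y ^ d) : y ^ a = y ^ c ∧ y ^ b = y ^ d := by
  have hei : e⁻¹ = e := inv_eq_of_mul_eq_one_left he
  have h1 : e * y ^ (a - c) * e = y ^ (d - b) := by
    have : y ^ (-c) * (y ^ a * e * y ^ b) * y ^ (-b) = y ^ (-c) * (y ^ c * e * y ^ d) * y ^ (-b) := by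
      rw [h]
    have h2 : y ^ (a - c) * e = e * y ^ (d - b) := by
      calc _ = y ^ (-c) * (y ^ a * e * y ^ b) * y ^ (-b) := by group
        _ = _ := this
        _ = _ := by group
    rw [mul_assoc, h2, ← mul_assoc, he, one_mul]
  have h2 := hI _ _ h1
  have h3 : y ^ (d - b) = 1 := by rw [← h1, h2, mul_one, he]
  rw [zpow_sub, mul_inv_eq_one] at h2 h3
  exact ⟨h2, h3.symm⟩

theorem core_D {e y : G} (he : e * e = 1)
    (hI : ∀ i j : ℤ, e * y ^ i * e = y ^ j → y ^ i = 1)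
    (τ : G ≃* G) (hτe : τ e = e) (hτy : τ y = y⁻¹) {d : ℤ} (h : DD e y d) :
    e * y ^ d * e = y ^ (-d) * e * y ^ (-d) := by
  have hei : e⁻¹ = e := inv_eq_of_mul_eq_one_left he
  obtain ⟨a, b, h⟩ := h
  have h1 : e * y ^ (-d) * e = y ^ (-a) * e * y ^ (-b) := by
    have := congrArg τ h
    simpa [hτe, hτy] using this
  have h2 : e * y ^ (-d) * e = y ^ (-b) * e * y ^ (-a) := by
    have := congrArg (·⁻¹) h
    simpa [hei, mul_assoc] using this
  have hab : y ^ a = y ^ b := by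
    have := (core_uniq he hI (h1.symm.trans h2)).1
    simpa using this
  have h3 : y ^ d = e * y ^ a * e * (y ^ a * e) := by
    calc y ^ d = e * (e * y ^ d * e) * e := by
          rw [← mul_assoc, ← mul_assoc, he, one_mul, mul_assoc, he, mul_one]
      _ = _ := by rw [h, ← hab]; simp only [mul_assoc]
  have h4 : e * y ^ a * e = y ^ d * e * y ^ (-a) := by
    rw [h3, mul_assoc (e * y ^ a * e), mul_assoc (y ^ a), he, mul_one]; group
  have h5 : e * y ^ (-a) * e = y ^ (-d) * e * y ^ a := by
    have := congrArg τ h4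
    simpa [hτe, hτy] using this
  have h6 : e * y ^ (-a) * e = y ^ a * e * y ^ (-d) := by
    have := congrArg (·⁻¹) h4
    simpa [hei, mul_assoc] using this
  have h7 := (core_uniq he hI (h5.symm.trans h6)).1
  rw [h, ← hab, h7]

theorem core_F5 [Finite G] {e y : G} (he : e * e = 1)
    (hI : ∀ i j : ℤ, e * y ^ i * e = y ^ j → y ^ i = 1)
    (hc : Nat.card G < 2 * orderOf y ^ 2) {d : ℤ} (h : ¬ DD e y d) :
    ∃ N : Subgroup G, y ∈ N ∧ e ∉ N ∧ e * y ^ d * e ∈ N := by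
  have hei : e⁻¹ = e := inv_eq_of_mul_eq_one_left he
  set t := e * y ^ d * e with ht
  let A := Subgroup.zpowers y
  let f : (A × A) ⊕ (A × A) → G := Sum.elim (fun p => p.1 * e * p.2) (fun p => p.1 * t * p.2)
  have hninj : ¬ Function.Injective f := by
    intro hf
    have := Nat.card_le_card_of_injective f hf
    rw [Nat.card_sum, Nat.card_prod, Nat.card_zpowers] at this
    nlinarith
  have key : ∃ i j : ℤ, y ^ i ≠ 1 ∧ t * y ^ i * t⁻¹ = y ^ j := by
    by_contra hk
    push Not at hk
    apply hninj
    rintro (⟨⟨_, a, rfl⟩, ⟨_, b, rfl⟩⟩ | ⟨⟨_, a, rfl⟩, ⟨_, b, rfl⟩⟩) (⟨⟨_, a', rfl⟩, ⟨_, b', rfl⟩⟩ | ⟨⟨_, a', rfl⟩, ⟨_, b', rfl⟩⟩) hab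
    · simp only [f, Sum.elim_inl] at hab
      obtain ⟨h1, h2⟩ := core_uniq he hI hab
      simp [h1, h2]
    · exfalso
      simp only [f, Sum.elim_inl, Sum.elim_inr] at hab
      apply h
      refine ⟨a - a', b - b', ?_⟩
      rw [← ht]
      calc t = y ^ (-a') * (y ^ a' * t * y ^ b') * y ^ (-b') := by group
        _ = _ := by rw [← hab]; group
    · exfalso
      simp only [f, Sum.elim_inl, Sum.elim_inr] at hab
      apply h
      refine ⟨a' - a, b' - b, ?_⟩
      rw [← ht]
      calc t = y ^ (-a) * (y ^ a * t * y ^ b) * y ^ (-b) := by group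
        _ = _ := by rw [hab]; group
    · simp only [f, Sum.elim_inr] at hab
      have h1 : t * y ^ (b - b') * t⁻¹ = y ^ (a' - a) := by
        calc _ = y ^ (-a) * (y ^ a * t * y ^ b) * y ^ (-b') * t⁻¹ := by group
          _ = _ := by rw [hab]; group
      have h2 : y ^ (b - b') = 1 := by
        by_contra h2
        exact hk _ _ h2 h1
      have h3 : y ^ (a' - a) = 1 := by rw [← h1, h2]; group
      rw [zpow_sub, mul_inv_eq_one] at h2 h3
      simp [h2, h3]
  obtain ⟨i, j, hi, hij⟩ := key
  refine ⟨Subgroup.normalizer (Subgroup.zpowers (y ^ i) : Set G), ?_, ?_, ?_⟩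
  · refine (Subgroup.mem_normalizer_iff).2 fun g => ?_
    constructor
    · rintro ⟨k, rfl⟩
      refine ⟨k, ?_⟩
      simp only [← zpow_mul]; group
    · rintro ⟨k, hk⟩
      refine ⟨k, ?_⟩
      have : g = y⁻¹ * (y ^ i) ^ k * y := by
        have hk' : (y ^ i) ^ k = y * g * y⁻¹ := hk
        rw [hk']; group
      rw [this]
      simp only [← zpow_mul]; group
  · intro hn
    have := (Subgroup.mem_normalizer_iff.1 hn (y ^ i)).1 (Subgroup.mem_zpowers _)
    obtain ⟨k, hk⟩ := this
    rw [hei] at hk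
    have hk' : (y ^ i) ^ k = e * y ^ i * e := hk
    rw [← zpow_mul] at hk'
    exact hi (hI _ _ hk'.symm)
  · have sub : ∀ i j : ℤ, orderOf (y ^ i) = orderOf (y ^ j) → y ^ j ∈ Subgroup.zpowers (y ^ i) := by
      intro i j hij
      have hq : 0 < orderOf y := orderOf_pos y
      have h1 : (orderOf y : ℤ) ∣ i * (orderOf (y ^ i)) := by
        rw [orderOf_dvd_iff_zpow_eq_one, zpow_mul, zpow_natCast, pow_orderOf_eq_one]
      have h2 : (orderOf y : ℤ) ∣ j * (orderOf (y ^ i)) := by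
        rw [orderOf_dvd_iff_zpow_eq_one, zpow_mul, zpow_natCast, hij, pow_orderOf_eq_one]
      set k := orderOf (y ^ i) with hk
      -- k divides q / g
      obtain ⟨i', hi'⟩ := Int.gcd_dvd_left i (orderOf y)
      obtain ⟨q', hq'⟩ := Int.gcd_dvd_right i (orderOf y)
      have hg0 : (Int.gcd i (orderOf y) : ℤ) ≠ 0 := by
        intro h0; rw [h0] at hq'; omega
      have hkq : (k : ℤ) ∣ q' := by
        rw [hk, orderOf_dvd_iff_zpow_eq_one, ← zpow_mul]
        rw [← orderOf_dvd_iff_zpow_eq_one]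
        refine ⟨i', ?_⟩
        calc i * q' = (Int.gcd i (orderOf y) * i') * q' := by rw [← hi']
          _ = (Int.gcd i (orderOf y) * q') * i' := by ring
          _ = _ := by rw [← hq']
      obtain ⟨m, hm⟩ := hkq
      have hgj : (Int.gcd i (orderOf y) : ℤ) ∣ j := by
        have hk0 : (k : ℤ) ≠ 0 := by
          have := orderOf_pos (y ^ i); omega
        refine Int.dvd_of_mul_dvd_mul_right hk0 (dvd_trans ?_ h2)
        refine ⟨m, ?_⟩
        nth_rw 1 [hq']; rw [hm]; ring
      obtain ⟨u, hu⟩ := hgj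
      refine ⟨Int.gcdA i (orderOf y) * u, ?_⟩
      have hb := Int.gcd_eq_gcd_ab i (orderOf y)
      have : y ^ j = (y ^ i) ^ (Int.gcdA i (orderOf y) * u) * (y ^ (orderOf y : ℤ)) ^ (Int.gcdB i (orderOf y) * u) := by
        rw [← zpow_mul, ← zpow_mul, ← zpow_add]; congr 1; rw [hu, hb]; ring
      rw [this, zpow_natCast, pow_orderOf_eq_one]; simp
    have ho : orderOf (y ^ i) = orderOf (y ^ j) := by
      rw [← hij]
      exact ((MulAut.conj t).orderOf_eq (y ^ i)).symm
    obtain ⟨u, hu⟩ := sub _ _ ho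
    have hu' : (y ^ i) ^ u = y ^ j := hu
    refine Subgroup.mem_normalizer_fintype ?_
    rintro _ ⟨k, rfl⟩
    refine ⟨u * k, ?_⟩
    change (y ^ i) ^ (u * k) = t * (y ^ i) ^ k * t⁻¹
    rw [← conj_zpow, hij, ← hu', zpow_mul]

theorem core_not {e y : G} {d : ℤ} {N : Subgroup G} (hy : y ∈ N) (heN : e ∉ N)
    (h : e * y ^ d * e ∈ N) : ¬ DD e y d := by
  rintro ⟨a, b, hab⟩
  rw [hab] at h
  apply heN
  rwa [N.mul_mem_cancel_right (N.zpow_mem hy b), N.mul_mem_cancel_left (N.zpow_mem hy a)] at h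

theorem conj_e_zpow {e y : G} (he : e * e = 1) (d c : ℤ) :
    e * y ^ (d * c) * e = (e * y ^ d * e) ^ c := by
  have hei : e⁻¹ = e := inv_eq_of_mul_eq_one_left he
  have := conj_zpow (a := e) (b := y ^ d) (i := c)
  rw [hei] at this
  rw [this, zpow_mul]

theorem core_mul [Finite G] {e y : G} (he : e * e = 1)
    (hI : ∀ i j : ℤ, e * y ^ i * e = y ^ j → y ^ i = 1)
    (hc : Nat.card G < 2 * orderOf y ^ 2) {d : ℤ} (h : ¬ DD e y d) (c : ℤ) : ¬ DD e y (d * c) := by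
  obtain ⟨N, h1, h2, h3⟩ := core_F5 he hI hc h
  apply core_not h1 h2
  rw [conj_e_zpow he]
  exact N.zpow_mem h3 c

theorem core_one [Finite G] {e y : G} (he : e * e = 1)
    (hI : ∀ i j : ℤ, e * y ^ i * e = y ^ j → y ^ i = 1)
    (hc : Nat.card G < 2 * orderOf y ^ 2) : DD e y 1 := by
  by_contra h
  have hall : ∀ c : ℤ, ¬ DD e y c := fun c => by
    have := core_mul he hI hc h c
    rwa [one_mul] at this
  let A := Subgroup.zpowers y
  let f : (A × A) ⊕ (A × A) → G := Sum.elim (fun p => p.1 * e * p.2) (fun p => e * p.1 * e * p.2)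
  have hf : Function.Injective f := by
    rintro (⟨⟨_, a, rfl⟩, ⟨_, b, rfl⟩⟩ | ⟨⟨_, a, rfl⟩, ⟨_, b, rfl⟩⟩) (⟨⟨_, a', rfl⟩, ⟨_, b', rfl⟩⟩ | ⟨⟨_, a', rfl⟩, ⟨_, b', rfl⟩⟩) hab
    · simp only [f, Sum.elim_inl] at hab
      obtain ⟨h1, h2⟩ := core_uniq he hI hab
      simp [h1, h2]
    · exfalso
      simp only [f, Sum.elim_inl, Sum.elim_inr] at hab
      apply hall a'
      refine ⟨a, b - b', ?_⟩
      rw [zpow_sub, ← mul_assoc, hab]; group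
    · exfalso
      simp only [f, Sum.elim_inl, Sum.elim_inr] at hab
      apply hall a
      refine ⟨a', b' - b, ?_⟩
      rw [zpow_sub, ← mul_assoc, ← hab]; group
    · simp only [f, Sum.elim_inr] at hab
      simp only [mul_assoc] at hab
      have hab := mul_left_cancel hab
      simp only [← mul_assoc] at hab
      obtain ⟨h1, h2⟩ := core_uniq he hI hab
      simp [h1, h2]
  have := Nat.card_le_card_of_injective f hf
  rw [Nat.card_sum, Nat.card_prod, Nat.card_zpowers] at this
  nlinarith

theorem core_two [Finite G] {e y : G} (he : e * e = 1) (hne : e ≠ 1)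
    (hI : ∀ i j : ℤ, e * y ^ i * e = y ^ j → y ^ i = 1)
    (τ : G ≃* G) (hτe : τ e = e) (hτy : τ y = y⁻¹)
    (hc : Nat.card G < 2 * orderOf y ^ 2) (hc2 : 3 * orderOf y ^ 2 ≤ 2 * Nat.card G) :
    ¬ DD e y 2 := by
  intro h2
  have hei : e⁻¹ = e := inv_eq_of_mul_eq_one_left he
  have h1 := core_one he hI hc
  have r1 := core_D he hI τ hτe hτy h1
  have r2 := core_D he hI τ hτe hτy h2
  have r2' : e * y ^ (-2 : ℤ) * e = y ^ (2 : ℤ) * e * y ^ (2 : ℤ) := by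
    have := congrArg (·⁻¹) r2
    simpa [hei, mul_assoc] using this
  have r3 : e * y ^ (2 : ℤ) * e = y ^ (1 : ℤ) * e * y ^ (1 : ℤ) := by
    calc e * y ^ (2 : ℤ) * e = (e * y ^ (1 : ℤ) * e) * (e * y ^ (1 : ℤ) * e) := by
          have := conj_e_zpow (y := y) he 1 2
          rw [one_mul] at this
          rw [this, zpow_two]
      _ = y ^ (-1 : ℤ) * (e * y ^ (-2 : ℤ) * e) * y ^ (-1 : ℤ) := by rw [r1]; group
      _ = _ := by rw [r2']; group
  have r4 := (core_uniq he hI (r2.symm.trans r3)).1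
  have r5 : y ^ 3 = 1 := by
    calc y ^ 3 = y ^ (1 : ℤ) * (y ^ (-2 : ℤ))⁻¹ := by group
      _ = 1 := by rw [r4]; group
  have ho : orderOf y ∣ 3 := orderOf_dvd_of_pow_eq_one r5
  have hoe : orderOf e = 2 := orderOf_eq_prime (by rw [pow_two, he]) hne
  have d1 : 2 ∣ Nat.card G := hoe ▸ orderOf_dvd_natCard e
  have d2 : orderOf y ∣ Nat.card G := orderOf_dvd_natCard y
  rcases (Nat.dvd_prime Nat.prime_three).1 ho with h | h <;> rw [h] at hc hc2 d2 <;> omega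

theorem core_even [Finite G] {e y : G} (he : e * e = 1)
    (hI : ∀ i j : ℤ, e * y ^ i * e = y ^ j → y ^ i = 1)
    (hc : Nat.card G < 2 * orderOf y ^ 2) (p : ℕ) (hp : p.Prime) (h : ¬ DD e y p) :
    p ∣ orderOf y := by
  by_contra hd
  have hcop : Nat.Coprime p (orderOf y) := (Nat.Prime.coprime_iff_not_dvd hp).2 hd
  have hb := Nat.gcd_eq_gcd_ab p (orderOf y)
  rw [hcop] at hb
  have h1 := core_mul he hI hc h (Nat.gcdA p (orderOf y))
  apply h1
  have : y ^ ((p : ℤ) * Nat.gcdA p (orderOf y)) = y ^ (1 : ℤ) := by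
    have e1 : (p : ℤ) * Nat.gcdA p (orderOf y) = 1 - orderOf y * Nat.gcdB p (orderOf y) := by
      push_cast at hb; linarith
    rw [e1, zpow_sub, zpow_mul, zpow_natCast, pow_orderOf_eq_one]; simp
  unfold DD
  rw [this]
  exact core_one he hI hc

theorem core_three [Finite G] {e y : G} (he : e * e = 1) (hne : e ≠ 1)
    (hI : ∀ i j : ℤ, e * y ^ i * e = y ^ j → y ^ i = 1)
    (τ : G ≃* G) (hτe : τ e = e) (hτy : τ y = y⁻¹)
    (hc : Nat.card G < 2 * orderOf y ^ 2) (hc2 : 3 * orderOf y ^ 2 ≤ 2 * Nat.card G) :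
    DD e y 3 := by
  by_contra h3
  have hei : e⁻¹ = e := inv_eq_of_mul_eq_one_left he
  have h2 := core_two he hne hI τ hτe hτy hc hc2
  have r1 := core_D he hI τ hτe hτy (core_one he hI hc)
  have q2 : 2 ∣ orderOf y := core_even he hI hc 2 Nat.prime_two (by exact_mod_cast h2)
  have q3 : 3 ∣ orderOf y := core_even he hI hc 3 Nat.prime_three (by exact_mod_cast h3)
  have q6 : 6 ∣ orderOf y := by omega
  obtain ⟨s, hs⟩ := q6
  obtain ⟨N, hyN, heN, hN⟩ := core_F5 he hI hc h2
  have hNk : ∀ k : ℤ, e * y ^ (2 * k) * e ∈ N := fun k => by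
    rw [conj_e_zpow he]; exact N.zpow_mem hN k
  have o2 : orderOf (y ^ 2) = 3 * s := by
    rw [orderOf_pow_of_dvd (by norm_num) q2]; omega
  have o6 : orderOf (y ^ 6) = s := by
    rw [orderOf_pow_of_dvd (by norm_num) ⟨s, hs⟩]; omega
  have hidx : 3 ≤ N.index := by
    have i0 : N.index ≠ 0 := Subgroup.index_ne_zero_of_finite
    have i1 : N.index ≠ 1 := by
      intro h
      rw [Subgroup.index_eq_one] at h
      rw [h] at heN; exact heN (Subgroup.mem_top _)
    have i2 : N.index ≠ 2 := by
      intro h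
      have a1 : ¬ (y * e) ∈ N := by rwa [N.mul_mem_cancel_left hyN]
      have a2 : e * (y * e) ∈ N := by
        rw [Subgroup.mul_mem_iff_of_index_two h]; tauto
      rw [← mul_assoc] at a2
      refine core_not hyN heN (d := 1) ?_ (core_one he hI hc)
      simpa using a2
    omega
  have hcard := Subgroup.index_mul_card N
  let f : (Subgroup.zpowers (y ^ 2) × Subgroup.zpowers y) ⊕ (Subgroup.zpowers (y ^ 6) × Subgroup.zpowers y) → G :=
    Sum.elim (fun p => e * p.1 * e * p.2) (fun p => y * (e * (y ^ (4 : ℤ) * p.1) * e) * p.2)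
  have z2 : ∀ k : ℤ, (y ^ 2) ^ k = y ^ (2 * k) := fun k => by rw [zpow_mul, zpow_ofNat]
  have z6 : ∀ k : ℤ, (y ^ 6) ^ k = y ^ (6 * k) := fun k => by rw [zpow_mul, zpow_ofNat]
  have hfN : ∀ p, f p ∈ N := by
    rintro (⟨⟨_, a, rfl⟩, ⟨_, b, rfl⟩⟩ | ⟨⟨_, a, rfl⟩, ⟨_, b, rfl⟩⟩)
    · simp only [f, Sum.elim_inl, z2]
      exact N.mul_mem (hNk a) (N.zpow_mem hyN b)
    · simp only [f, Sum.elim_inr, z6, ← zpow_add]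
      refine N.mul_mem (N.mul_mem hyN ?_) (N.zpow_mem hyN b)
      have := hNk (2 + 3 * a)
      convert this using 4; ring
  have hcross : ∀ a b a' b' : ℤ, e * y ^ (2 * a) * e * y ^ b ≠
      y * (e * (y ^ (4 : ℤ) * y ^ (6 * a')) * e) * y ^ b' := by
    intro a b a' b' h
    apply core_mul he hI hc h3 (1 + 2 * a')
    have h' : y * e * (e * y ^ (2 * a) * e * y ^ b) = y ^ (1 + 2 * a) * e * y ^ b := by
      calc _ = y * (e * e) * y ^ (2 * a) * e * y ^ b := by simp only [mul_assoc]
        _ = _ := by rw [he, zpow_add]; simp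
    have r1' : y ^ (1 : ℤ) * e * y ^ (1 : ℤ) = e * y ^ (-1 : ℤ) * e := by
      have := congrArg (·⁻¹) r1
      simpa [hei, mul_assoc] using this.symm
    have h'' : y * e * (y * (e * (y ^ (4 : ℤ) * y ^ (6 * a')) * e) * y ^ b') =
        e * y ^ (3 * (1 + 2 * a')) * e * y ^ b' := by
      calc _ = (y ^ (1 : ℤ) * e * y ^ (1 : ℤ)) * e * y ^ (4 : ℤ) * y ^ (6 * a') * e * y ^ b' := by
            simp only [mul_assoc, zpow_one]
        _ = e * y ^ (-1 : ℤ) * (e * e) * y ^ (4 : ℤ) * y ^ (6 * a') * e * y ^ b' := by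
            rw [r1']; simp only [mul_assoc]
        _ = e * (y ^ (-1 : ℤ) * y ^ (4 : ℤ) * y ^ (6 * a')) * e * y ^ b' := by
            rw [he, mul_one]; simp only [mul_assoc]
        _ = _ := by
            rw [← zpow_add, ← zpow_add]; congr 4; ring
    rw [← h, h'] at h''
    refine ⟨1 + 2 * a, b - b', ?_⟩
    rw [zpow_sub, ← mul_assoc, h'']; group
  have hf : Function.Injective f := by
    rintro (⟨⟨_, a, rfl⟩, ⟨_, b, rfl⟩⟩ | ⟨⟨_, a, rfl⟩, ⟨_, b, rfl⟩⟩) (⟨⟨_, a', rfl⟩, ⟨_, b', rfl⟩⟩ | ⟨⟨_, a', rfl⟩, ⟨_, b', rfl⟩⟩) hab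
    · simp only [f, Sum.elim_inl, z2, mul_assoc] at hab
      have hab := mul_left_cancel hab
      simp only [← mul_assoc] at hab
      obtain ⟨h1, h2⟩ := core_uniq he hI hab
      simp [z2, h1, h2]
    · simp only [f, Sum.elim_inl, Sum.elim_inr, z2, z6] at hab
      exact (hcross _ _ _ _ hab).elim
    · simp only [f, Sum.elim_inl, Sum.elim_inr, z2, z6] at hab
      exact (hcross _ _ _ _ hab.symm).elim
    · simp only [f, Sum.elim_inr, z6, mul_assoc] at hab
      have hab := mul_left_cancel (mul_left_cancel (mul_left_cancel hab))
      simp only [← mul_assoc] at hab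
      obtain ⟨h1, h2⟩ := core_uniq he hI hab
      simp [z6, h1, h2]
  have hle := Nat.card_le_card_of_injective (fun p => (⟨f p, hfN p⟩ : N))
    (fun p p' h => hf (congrArg Subtype.val h))
  rw [Nat.card_sum, Nat.card_prod, Nat.card_prod, Nat.card_zpowers, Nat.card_zpowers,
    Nat.card_zpowers, o2, o6, hs] at hle
  rw [hs] at hc
  have : 3 * Nat.card N ≤ N.index * Nat.card N := Nat.mul_le_mul_right _ hidx
  nlinarith

theorem core_main [Finite G] {e y : G} (hgen : Subgroup.closure {e, y} = ⊤)
    (he : e * e = 1) (hne : e ≠ 1)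
    (hI : ∀ i j : ℤ, e * y ^ i * e = y ^ j → y ^ i = 1)
    (τ : G ≃* G) (hτe : τ e = e) (hτy : τ y = y⁻¹)
    (hc : Nat.card G < 2 * orderOf y ^ 2) (hc2 : 3 * orderOf y ^ 2 ≤ 2 * Nat.card G) :
    2 * Nat.card G ≤ 3 * orderOf y ^ 2 := by
  have hei : e⁻¹ = e := inv_eq_of_mul_eq_one_left he
  have h2 := core_two he hne hI τ hτe hτy hc hc2
  have q2 : 2 ∣ orderOf y := core_even he hI hc 2 Nat.prime_two (by exact_mod_cast h2)
  have r1 := core_D he hI τ hτe hτy (core_one he hI hc)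
  have r3 := core_D he hI τ hτe hτy (core_three he hne hI τ hτe hτy hc hc2)
  have r1' : e * y ^ (-1 : ℤ) * e = y ^ (1 : ℤ) * e * y ^ (1 : ℤ) := by
    have := congrArg (·⁻¹) r1
    simpa [hei, mul_assoc] using this
  have ee : ∀ a b : G, e * (a * b) * e = (e * a * e) * (e * b * e) := fun a b => by
    calc _ = e * a * 1 * b * e := by simp only [mul_assoc, one_mul]
      _ = _ := by rw [← he]; simp only [mul_assoc]
  have s1 : e * y ^ (2 : ℤ) * e = y ^ (-3 : ℤ) * (e * y ^ (-2 : ℤ) * e) * y ^ (1 : ℤ) := by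
    have : y ^ (2 : ℤ) = y ^ (3 : ℤ) * y ^ (-1 : ℤ) := by group
    rw [this, ee, r3, r1']; group
  have s2 : e * y ^ (2 : ℤ) * e = y ^ (-1 : ℤ) * (e * y ^ (-2 : ℤ) * e) * y ^ (-1 : ℤ) := by
    have : y ^ (2 : ℤ) = y ^ (1 : ℤ) * y ^ (1 : ℤ) := by rw [← zpow_add]; norm_num
    rw [this, ee, r1]; group
  have hcom : Commute (y ^ (2 : ℤ)) (e * y ^ (-2 : ℤ) * e) := by
    have := s1.symm.trans s2
    generalize e * y ^ (-2 : ℤ) * e = g at *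
    have h' : y ^ (3 : ℤ) * (y ^ (-3 : ℤ) * g * y ^ (1 : ℤ)) * y ^ (1 : ℤ)
      = y ^ (3 : ℤ) * (y ^ (-1 : ℤ) * g * y ^ (-1 : ℤ)) * y ^ (1 : ℤ) := by rw [this]
    have l1 : y ^ (3 : ℤ) * (y ^ (-3 : ℤ) * g * y ^ (1 : ℤ)) * y ^ (1 : ℤ) = g * y ^ (2 : ℤ) := by
      rw [zpow_two]; group
    have l2 : y ^ (3 : ℤ) * (y ^ (-1 : ℤ) * g * y ^ (-1 : ℤ)) * y ^ (1 : ℤ) = y ^ (2 : ℤ) * g := by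
      group
    rw [l1, l2] at h'
    exact h'.symm
  have hcom' : ∀ i j : ℤ, Commute (y ^ (2 * i)) (e * y ^ (2 * j) * e) := by
    intro i j
    have : e * y ^ (2 * j) * e = (e * y ^ (-2 : ℤ) * e) ^ (-j) := by
      rw [← conj_e_zpow he]; congr 3; ring
    rw [this, zpow_mul]
    exact (hcom.zpow_left i).zpow_right (-j)
  -- six representatives
  let R : Fin 6 → G := ![1, e, y, e * y, y * e, e * (y * e)]
  let A := Subgroup.zpowers (y ^ (2 : ℕ))
  let f : Fin 6 × A × A → G := fun p => R p.1 * (p.2.1 * (e * p.2.2 * e))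
  have z2 : ∀ k : ℤ, (y ^ 2) ^ k = y ^ (2 * k) := fun k => by rw [zpow_mul, zpow_ofNat]
  have hmk : ∀ (u : Fin 6) (i j : ℤ), R u * (y ^ (2 * i) * (e * y ^ (2 * j) * e)) ∈ Set.range f :=
    fun u i j => ⟨(u, ⟨_, i, rfl⟩, ⟨_, j, rfl⟩), by simp only [f, z2]⟩
  have hmul1 : ∀ i j : ℤ, y ^ (2 : ℤ) * (y ^ (2 * i) * (e * y ^ (2 * j) * e)) =
      y ^ (2 * (1 + i)) * (e * y ^ (2 * j) * e) := by
    intro i j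
    rw [← mul_assoc, ← zpow_add]; congr 2; ring
  have hmul1' : ∀ i j : ℤ, y ^ (-2 : ℤ) * (y ^ (2 * i) * (e * y ^ (2 * j) * e)) =
      y ^ (2 * (-1 + i)) * (e * y ^ (2 * j) * e) := by
    intro i j
    rw [← mul_assoc, ← zpow_add]; congr 2; ring
  have hmul2 : ∀ k i j : ℤ, (e * y ^ (2 * k) * e) * (y ^ (2 * i) * (e * y ^ (2 * j) * e)) =
      y ^ (2 * i) * (e * y ^ (2 * (k + j)) * e) := by
    intro k i j
    rw [← mul_assoc, ← (hcom' i k).eq, mul_assoc, ← ee, ← zpow_add]; congr 4; ring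
  have hE : ∀ g ∈ Set.range f, e * g ∈ Set.range f := by
    rintro _ ⟨⟨u, ⟨_, i, rfl⟩, ⟨_, j, rfl⟩⟩, rfl⟩
    simp only [f, z2, ← mul_assoc e (R u)]
    have : ∃ v, e * R u = R v := by
      fin_cases u
      · exact ⟨1, by simp [R]⟩
      · exact ⟨0, by simp [R, he]⟩
      · exact ⟨3, by simp [R]⟩
      · exact ⟨2, by simp [R, ← mul_assoc, he]⟩
      · exact ⟨5, by simp [R]⟩
      · exact ⟨4, by simp [R, ← mul_assoc, he]⟩
    obtain ⟨v, hv⟩ := this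
    have := hmk v i j
    rw [← hv] at this
    exact this
  have hY : ∀ g ∈ Set.range f, y * g ∈ Set.range f := by
    rintro _ ⟨⟨u, ⟨_, i, rfl⟩, ⟨_, j, rfl⟩⟩, rfl⟩
    simp only [f, z2, ← mul_assoc y (R u)]
    fin_cases u
    · have := hmk 2 i j
      convert this using 2
      simp [R]
    · have := hmk 4 i j
      convert this using 2
      simp [R]
    · have := hmk 0 (1 + i) j
      rw [← hmul1, ← mul_assoc] at this
      convert this using 2
      simp only [R]
      change y * y = 1 * y ^ (2 : ℤ)
      rw [one_mul, zpow_two]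
    · have := hmk 5 i (-1 + j)
      rw [← hmul2, ← mul_assoc (R 5)] at this
      convert this using 2
      simp only [R]
      change y * (e * y) = e * (y * e) * (e * y ^ (2 * (-1) : ℤ) * e)
      have t1 : e * (y * e) * (e * y ^ (2 * (-1) : ℤ) * e) = e * y * (e * e) * y ^ (-2 : ℤ) * e := by
        simp only [mul_assoc]; rfl
      rw [t1, he]
      calc y * (e * y) = y ^ (1 : ℤ) * e * y ^ (1 : ℤ) := by simp [mul_assoc]
        _ = e * y ^ (-1 : ℤ) * e := r1'.symm
        _ = _ := by group
    · have := hmk 1 i (1 + j)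
      rw [← hmul2, ← mul_assoc (R 1)] at this
      convert this using 2
      change y * (y * e) = e * (e * y ^ (2 * 1 : ℤ) * e)
      rw [← mul_assoc e, ← mul_assoc e e, he, mul_one, zpow_two, one_mul, mul_assoc]
    · have := hmk 3 (-1 + i) j
      rw [← hmul1', ← mul_assoc (R 3)] at this
      convert this using 2
      change y * (e * (y * e)) = e * y * y ^ (-2 : ℤ)
      have t1 : y * (e * (y * e)) = (y ^ (1 : ℤ) * e * y ^ (1 : ℤ)) * e := by simp [mul_assoc]
      rw [t1, ← r1', mul_assoc _ e e, he]; group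
  have hYn : ∀ n : ℕ, ∀ g ∈ Set.range f, y ^ n * g ∈ Set.range f := by
    intro n
    induction n with
    | zero => intro g hg; simpa using hg
    | succ k ih => intro g hg; rw [pow_succ, mul_assoc]; exact ih _ (hY g hg)
  have hsurj : Function.Surjective f := by
    intro g
    have hg : g ∈ Subgroup.closure {e, y} := by rw [hgen]; trivial
    change g ∈ Set.range f
    induction hg using Subgroup.closure_induction_left with
    | one => have := hmk 0 0 0; simpa [R, he] using this
    | mul_left a ha g _ ih =>
      rcases ha with rfl | rfl
      · exact hE _ ih
      · exact hY _ ih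
    | inv_mul_cancel a ha g _ ih =>
      rcases ha with rfl | rfl
      · rw [hei]; exact hE _ ih
      · have : a⁻¹ = a ^ (orderOf a - 1) := by
          apply inv_eq_of_mul_eq_one_left
          rw [← pow_succ, Nat.sub_add_cancel (orderOf_pos a), pow_orderOf_eq_one]
        rw [this]; exact hYn _ _ ih
  have := Nat.card_le_card_of_surjective f hsurj
  rw [Nat.card_prod, Nat.card_prod, Nat.card_zpowers, orderOf_pow_of_dvd (by norm_num) q2,
    Nat.card_eq_fintype_card (α := Fin 6), Fintype.card_fin] at this
  obtain ⟨m, hm⟩ := q2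
  rw [hm, Nat.mul_div_cancel_left _ (by norm_num)] at this
  rw [hm]
  nlinarith

end core

/-- A simple reflexive regular map, not the tetrahedron, whose density satisfies
`1/2 < den ≤ 2/3` has density exactly 2/3. -/
theorem density_eq_two_thirds
    (G : Type*) [Group G] [Finite G] (x y : G)
    (hgen : Subgroup.closure {x, y} = ⊤) (hxy : (x * y) ^ 2 = 1)
    (hrefl : IsReflexive x y) (hsimple : IsSimple x y)
    (hnt : ¬ IsTet G x y)
    (hden₁ : 2 * orderOf y ^ 2 > Nat.card G)
    (hden₂ : 3 * orderOf y ^ 2 ≤ 2 * Nat.card G) :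
    3 * orderOf y ^ 2 = 2 * Nat.card G := by
  obtain ⟨σ, hσx, hσy⟩ := hrefl
  obtain ⟨hs1, hs2⟩ := hsimple
  have he : (x * y) * (x * y) = 1 := by rw [← pow_two]; exact hxy
  have hei : (x * y)⁻¹ = x * y := inv_eq_of_mul_eq_one_left he
  have heA : ∀ j : ℤ, x * y ≠ y ^ j := by
    intro j hj
    apply hs1 1
    rw [QuotientGroup.eq, one_mul, inv_one, one_mul, hj]
    exact ⟨j, rfl⟩
  have hne : x * y ≠ 1 := by simpa using heA 0
  have hI : ∀ i j : ℤ, (x * y) * y ^ i * (x * y) = y ^ j → y ^ i = 1 := by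
    intro i j h
    have h1 := hs2 1 (y ^ j) (by
      have a1 : (QuotientGroup.mk (y ^ j) : Vertex y) = QuotientGroup.mk 1 := by
        rw [QuotientGroup.eq]; exact ⟨-j, by simp⟩
      have a2 : (QuotientGroup.mk (y ^ j * x * y) : Vertex y) = QuotientGroup.mk (1 * x * y) := by
        rw [QuotientGroup.eq]
        refine ⟨-i, ?_⟩
        change y ^ (-i) = _
        rw [mul_assoc (y ^ j), ← h, one_mul, mul_assoc _ (x * y) (x * y), he, mul_one]
        rw [mul_inv_rev, hei, mul_assoc, he]; simp
      rw [a1, a2])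
    rw [QuotientGroup.eq, inv_one, one_mul] at h1
    obtain ⟨k, hk⟩ := h1
    have hk' : (x * y) ^ k = y ^ j := hk
    have hj : y ^ j = 1 := by
      rcases Int.even_or_odd' k with ⟨m, rfl | rfl⟩
      · rw [← hk', zpow_mul, zpow_ofNat, hxy, one_zpow]
      · exfalso
        apply heA j
        rw [← hk', zpow_add, zpow_mul, zpow_ofNat, hxy, one_zpow, one_mul, zpow_one]
    rw [hj] at h
    calc y ^ i = (x * y) * ((x * y) * y ^ i * (x * y)) * (x * y) := by
          generalize x * y = E at he
          rw [← mul_assoc, ← mul_assoc, he, one_mul, mul_assoc, he, mul_one]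
      _ = 1 := by rw [h, mul_one, he]
  have hgen' : Subgroup.closure {x * y, y} = ⊤ := by
    rw [eq_top_iff, ← hgen, Subgroup.closure_le]
    have m1 : x * y ∈ Subgroup.closure {x * y, y} := Subgroup.subset_closure (by simp)
    have m2 : y ∈ Subgroup.closure {x * y, y} := Subgroup.subset_closure (by simp)
    rintro g (rfl | rfl)
    · exact (Subgroup.mul_mem_cancel_right _ m2).1 m1
    · exact m2
  have h1 := core_main hgen' he hne hI (σ.trans (MulAut.conj y⁻¹))
    (by
      simp only [MulEquiv.trans_apply, MulAut.conj_apply, map_mul, hσx, hσy]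
      rw [← hei]; group)
    (by
      simp only [MulEquiv.trans_apply, MulAut.conj_apply, hσy]; group) hden₁ hden₂
  omega

end RegularMap
end
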